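/- For every n ≥ 1 with n ≡ 0 (mod 4) or n ≡ 3 (mod 4), the thickness of the complete tripartite graph K_{1,n,n} equals ⌈(n+2)/4⌉. -/

import Mathlib

open SimpleGraph

/-- A simple graph is planar if it admits a drawing in the plane: an injective
placement of vertices and, for each edge, an injective continuous arc joining
the images of its endpoints, such that arcs avoid vertex images in their
interiors and distinct arcs meet only at vertex images. -/
def IsPlanar {V : Type*} (G : SimpleGraph V) : Prop :=
  ∃ (f : V → ℝ × ℝ) (γ : G.edgeSet → (Set.Icc (0:ℝ) 1 → ℝ × ℝ)),
    Function.Injective f ∧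
    (∀ e : G.edgeSet, Continuous (γ e)) ∧
    (∀ e : G.edgeSet, ∃ u v : V, (e : Sym2 V) = s(u, v) ∧
      γ e ⟨0, by norm_num⟩ = f u ∧ γ e ⟨1, by norm_num⟩ = f v) ∧
    (∀ e : G.edgeSet, Function.Injective (γ e)) ∧
    (∀ e : G.edgeSet, ∀ t : Set.Icc (0:ℝ) 1, (t : ℝ) ≠ 0 → (t : ℝ) ≠ 1 →
      ∀ v : V, γ e t ≠ f v) ∧
    (∀ e e' : G.edgeSet, e ≠ e' → ∀ s t : Set.Icc (0:ℝ) 1,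
      γ e s = γ e' t → γ e s ∈ Set.range f)

/-- The thickness of a graph: the least `n` such that `G` is the union of `n`
planar subgraphs. -/
noncomputable def thickness {V : Type*} (G : SimpleGraph V) : ℕ :=
  sInf {n : ℕ | ∃ H : Fin n → SimpleGraph V,
    (∀ i, H i ≤ G) ∧ (∀ i, IsPlanar (H i)) ∧ (⨆ i, H i) = G}

/-!
Lower bound. A drawing of a planar graph `G` on a sufficiently fine grid exhibits `G` as a minor of
a grid graph: the vertices and the edges become disjoint connected sets of cells, because disjoint
compact sets are at positive distance. The faces of the grid provide an abstract dual, that is, a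
second graph on the same edges whose bonds are cycles, and abstract duals pass to minors. Counting
dimensions of cycle spaces then replaces Euler's formula: a triangle-free planar graph with at
least three vertices has at most `2|V| - 4` edges. If `K_{1,n,n}` is covered by `k` planar graphs,
then so is `K_{n,n}`, whence `n² ≤ k(4n - 4)`, and `4k > n + 1`.

Upper bound. A graph with a two-page book embedding is planar. The indices `0, …, n - 1` are cut
into blocks of four. The layer of a block joins its four left and four right vertices to half of the
opposite vertices each, in such a way that every edge `(a, b)` with `a ≠ b` appears in the layer of
the block of `a` or in that of `b`; one further layer contains the edges `(a, a)` and the star of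
the apex.
-/

section AbstractDual

open Finset

variable {V F : Type*} [Fintype V] {G : SimpleGraph V} [DecidableRel G.Adj] [DecidableEq F]

/-- The boundary of the face `f` as an edge labelling; edges with `f` on both sides cancel. -/
def faceBoundary (l r : G.edgeSet → F) (f : F) (e : G.edgeSet) : ZMod 2 :=
  (if l e = f then 1 else 0) + if r e = f then 1 else 0

/-- The faces with nonempty boundary, i.e. the faces incident with an edge having different faces on
its two sides. -/
def properFaces (l r : G.edgeSet → F) : Finset F :=
  ({e | l e ≠ r e} : Finset G.edgeSet).biUnion fun e ↦ {l e, r e}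

variable {l r : G.edgeSet → F}

lemma mem_properFaces {f : F} :
    f ∈ properFaces l r ↔ ∃ e, faceBoundary l r f e ≠ 0 := by
  simp only [properFaces, faceBoundary, mem_biUnion, mem_filter, mem_univ, true_and, mem_insert,
    mem_singleton]
  refine exists_congr fun e ↦ ?_
  by_cases hl : l e = f <;> by_cases hr : r e = f <;>
    simp [hl, hr, eq_comm, CharTwo.add_self_eq_zero]
  all_goals grind

lemma mul_card_properFaces_le {g : ℕ}
    (hg : ∀ f ∈ properFaces l r, g ≤ #{e | faceBoundary l r f e ≠ 0}) :
    g * #(properFaces l r) ≤ 2 * Fintype.card G.edgeSet := by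
  have sides (e : G.edgeSet) : #{f ∈ properFaces l r | faceBoundary l r f e ≠ 0} ≤ 2 := by
    refine (card_le_card (t := {l e, r e}) fun f hf ↦ ?_).trans card_le_two
    have := (mem_filter.1 hf).2
    grind [faceBoundary]
  rw [mul_comm, mul_comm 2]
  exact card_mul_le_card_mul (fun f e ↦ faceBoundary l r f e ≠ 0) hg fun e _ ↦ sides e

variable [DecidableEq V]

/-- The cycle space of a graph over `ZMod 2`: the edge labellings whose sum at every vertex
vanishes. -/
noncomputable def cycleSpace (G : SimpleGraph V) [DecidableRel G.Adj] :
    Submodule (ZMod 2) (G.edgeSet → ZMod 2) :=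
  LinearMap.ker ((G.incMatrix (ZMod 2)).submatrix id (Subtype.val : G.edgeSet → Sym2 V)).mulVecLin

lemma mem_cycleSpace {z : G.edgeSet → ZMod 2} :
    z ∈ cycleSpace G ↔ ∀ v, ∑ e with v ∈ e.1, z e = 0 := by
  simp [cycleSpace, funext_iff, Matrix.mulVec, dotProduct, incMatrix_apply', incidenceSet,
    Finset.sum_filter]

lemma card_edgeSet_add_one_le_finrank_cycleSpace_add [Nonempty V] :
    Fintype.card G.edgeSet + 1 ≤ Module.finrank (ZMod 2) (cycleSpace G) + Fintype.card V := by
  let M := ((G.incMatrix (ZMod 2)).submatrix id (Subtype.val : G.edgeSet → Sym2 V)).mulVecLin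
  let σ : (V → ZMod 2) →ₗ[ZMod 2] ZMod 2 := ∑ v, LinearMap.proj v
  have range_le : LinearMap.range M ≤ LinearMap.ker σ := by
    rintro _ ⟨z, rfl⟩
    have column_sum (e : G.edgeSet) : ∑ v, G.incMatrix (ZMod 2) v e.1 = 0 :=
      (G.sum_incMatrix_apply_of_mem_edgeSet e.2).trans CharTwo.two_eq_zero
    simp only [LinearMap.mem_ker, σ, M, LinearMap.sum_apply, LinearMap.proj_apply,
      Matrix.mulVecLin_apply, Matrix.mulVec, dotProduct, Matrix.submatrix_apply, id_eq]
    rw [Finset.sum_comm]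
    simp [← Finset.sum_mul, column_sum]
  have σ_ne_zero : σ ≠ 0 := by
    obtain ⟨v⟩ := ‹Nonempty V›
    intro h
    simpa [σ] using LinearMap.congr_fun h (Pi.single v 1)
  have rank_M := LinearMap.finrank_range_add_finrank_ker M
  have rank_σ := Module.Dual.finrank_ker_add_one_of_ne_zero σ_ne_zero
  have := Submodule.finrank_mono range_le
  rw [Module.finrank_pi] at rank_M rank_σ
  change Fintype.card G.edgeSet + 1 ≤ Module.finrank (ZMod 2) (LinearMap.ker M) + _
  change _ = Fintype.card G.edgeSet at rank_M
  omega

/-- `IsAbstractDual G l r` says that `l` and `r` turn the edges of `G` into the edges of an abstract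
dual multigraph on `F` in the sense of Whitney: the cycles of `G` are the cuts of the dual.
For a plane graph, `l e` and `r e` are the faces on the two sides of `e`. -/
def IsAbstractDual (G : SimpleGraph V) [DecidableRel G.Adj] (l r : G.edgeSet → F) : Prop :=
  ∀ z, z ∈ cycleSpace G ↔ ∃ h : F → ZMod 2, ∀ e, z e = h (l e) + h (r e)

lemma IsAbstractDual.faceBoundary_mem_cycleSpace (hd : IsAbstractDual G l r) (f : F) :
    faceBoundary l r f ∈ cycleSpace G :=
  (hd _).2 ⟨fun f' ↦ if f' = f then 1 else 0, fun _ ↦ rfl⟩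

lemma IsAbstractDual.finrank_cycleSpace_lt (hd : IsAbstractDual G l r)
    (hG : cycleSpace G ≠ ⊥) :
    Module.finrank (ZMod 2) (cycleSpace G) < #(properFaces l r) := by
  have eq_sum {h : F → ZMod 2} {e : G.edgeSet} (f₀ : F) : h (l e) + h (r e) =
      ∑ f ∈ (properFaces l r).erase f₀, (h f - h f₀) * faceBoundary l r f e := by
    rw [Finset.sum_erase _ (by simp)]
    by_cases hlr : l e = r e
    · simp [faceBoundary, hlr, CharTwo.add_self_eq_zero]
    · have hl : l e ∈ properFaces l r := mem_properFaces.2 ⟨e, by simp [faceBoundary, Ne.symm hlr]⟩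
      have hr : r e ∈ properFaces l r := mem_properFaces.2 ⟨e, by simp [faceBoundary, hlr]⟩
      simp only [faceBoundary, mul_add, mul_ite, mul_one, mul_zero, sum_add_distrib,
        Finset.sum_ite_eq, hl, hr, if_true]
      linear_combination CharTwo.add_self_eq_zero (h f₀)
  have proper_nonempty : (properFaces l r).Nonempty := by
    obtain ⟨z, hz, z_ne⟩ := Submodule.exists_mem_ne_zero_of_ne_bot hG
    obtain ⟨h, hh⟩ := (hd z).1 hz
    obtain ⟨e, he⟩ := Function.ne_iff.1 z_ne
    refine ⟨l e, mem_properFaces.2 ⟨e, ?_⟩⟩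
    have : r e ≠ l e := fun hlr ↦ he (by simp [hh, hlr, CharTwo.add_self_eq_zero])
    simp [faceBoundary, this]
  obtain ⟨f₀, hf₀⟩ := proper_nonempty
  let boundaries := ((properFaces l r).erase f₀).image (faceBoundary l r)
  have le_span : cycleSpace G ≤ Submodule.span (ZMod 2) boundaries := by
    intro z hz
    obtain ⟨h, hh⟩ := (hd z).1 hz
    have : z = ∑ f ∈ (properFaces l r).erase f₀, (h f - h f₀) • faceBoundary l r f := by
      ext e
      simp [hh, eq_sum f₀]
    rw [this]
    exact Submodule.sum_mem _ fun f hf ↦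
      Submodule.smul_mem _ _ (Submodule.subset_span (mem_coe.2 (mem_image_of_mem _ hf)))
  calc Module.finrank (ZMod 2) (cycleSpace G)
      ≤ #boundaries := (Submodule.finrank_mono le_span).trans (finrank_span_finset_le_card _)
    _ ≤ #((properFaces l r).erase f₀) := card_image_le
    _ < #(properFaces l r) := card_erase_lt_of_mem hf₀

omit [DecidableEq F] in
lemma IsAbstractDual.mul_card_edgeSet_add_two_le (hd : IsAbstractDual G l r)
    (hG : cycleSpace G ≠ ⊥) {g : ℕ} (hg : ∀ z ∈ cycleSpace G, z ≠ 0 → g ≤ #{e | z e ≠ 0}) :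
    g * (Fintype.card G.edgeSet + 2) ≤ 2 * Fintype.card G.edgeSet + g * Fintype.card V := by
  classical
  have : Nonempty V := by
    obtain ⟨z, -, z_ne⟩ := Submodule.exists_mem_ne_zero_of_ne_bot hG
    obtain ⟨e, -⟩ := Function.ne_iff.1 z_ne
    exact ⟨e.1.out.1⟩
  have dimension := card_edgeSet_add_one_le_finrank_cycleSpace_add (G := G)
  have faces := hd.finrank_cycleSpace_lt hG
  have double_count := mul_card_properFaces_le (l := l) (r := r) fun f hf ↦
    hg _ (hd.faceBoundary_mem_cycleSpace f) (Function.ne_iff.2 (mem_properFaces.1 hf))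
  calc g * (Fintype.card G.edgeSet + 2)
      ≤ g * (#(properFaces l r) + Fintype.card V) := Nat.mul_le_mul_left g (by omega)
    _ ≤ 2 * Fintype.card G.edgeSet + g * Fintype.card V := by rw [mul_add]; gcongr

lemma exists_ne_mem_of_mem_cycleSpace {z : G.edgeSet → ZMod 2} (hz : z ∈ cycleSpace G) {v : V}
    {e : G.edgeSet} (he : z e ≠ 0) (hv : v ∈ e.1) : ∃ e' ≠ e, z e' ≠ 0 ∧ v ∈ e'.1 := by
  by_contra! h
  refine he ((Finset.sum_eq_single_of_mem e (by simpa using hv) fun e' he' hne ↦ ?_).symm.trans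
    (mem_cycleSpace.1 hz v))
  by_contra hze'
  exact h e' hne hze' (by simpa using he')

lemma exists_adj_of_mem_cycleSpace {z : G.edgeSet → ZMod 2} (hz : z ∈ cycleSpace G) {a b : V}
    (hab : G.Adj a b) (he : z ⟨s(a, b), hab⟩ ≠ 0) :
    ∃ c, c ≠ a ∧ ∃ hbc : G.Adj b c, z ⟨s(b, c), hbc⟩ ≠ 0 := by
  obtain ⟨⟨e', hG⟩, hne, hze', hb⟩ := exists_ne_mem_of_mem_cycleSpace hz he (Sym2.mem_mk_right a b)
  obtain ⟨c, rfl⟩ := hb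
  exact ⟨c, by rintro rfl; exact hne (Subtype.ext Sym2.eq_swap), hG, hze'⟩

lemma four_le_card_support_of_mem_cycleSpace (hG : G.CliqueFree 3) {z : G.edgeSet → ZMod 2}
    (hz : z ∈ cycleSpace G) (hne : z ≠ 0) : 4 ≤ #{e | z e ≠ 0} := by
  obtain ⟨⟨e, hab⟩, he⟩ := Function.ne_iff.1 hne
  obtain ⟨a, b⟩ := e
  change G.Adj a b at hab
  obtain ⟨c, hca, hbc, hzbc⟩ := exists_adj_of_mem_cycleSpace hz hab he
  obtain ⟨d, hdb, hcd, hzcd⟩ := exists_adj_of_mem_cycleSpace hz hbc hzbc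
  obtain ⟨x, hxc, hdx, hzdx⟩ := exists_adj_of_mem_cycleSpace hz hcd hzcd
  have hda : d ≠ a := by
    rintro rfl
    exact hG {d, b, c} (is3Clique_triple_iff.2 ⟨hab, hcd.symm, hbc⟩)
  have hxb : x ≠ b := by
    rintro rfl
    exact hG {x, c, d} (is3Clique_triple_iff.2 ⟨hbc, hdx.symm, hcd⟩)
  let support : Finset G.edgeSet :=
    {⟨s(a, b), hab⟩, ⟨s(b, c), hbc⟩, ⟨s(c, d), hcd⟩, ⟨s(d, x), hdx⟩}
  have card_support : #support = 4 := by
    rw [card_insert_of_notMem, card_insert_of_notMem, card_pair]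
    all_goals simp [Subtype.ext_iff, hab.ne, hbc.ne, hcd.ne, hca.symm, hxc.symm,
      hda.symm, hxb.symm, hdb.symm]
  rw [← card_support]
  refine card_le_card fun e he ↦ ?_
  simp only [support, mem_insert, mem_singleton] at he
  rcases he with rfl | rfl | rfl | rfl <;> simpa

omit [DecidableEq F] in
lemma IsAbstractDual.card_edgeSet_add_four_le (hd : IsAbstractDual G l r) (hG : G.CliqueFree 3)
    (hV : 3 ≤ Fintype.card V) : Fintype.card G.edgeSet + 4 ≤ 2 * Fintype.card V := by
  by_cases hbot : cycleSpace G = ⊥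
  · have : Nonempty V := Fintype.card_pos_iff.1 (by lia)
    have := card_edgeSet_add_one_le_finrank_cycleSpace_add (G := G)
    rw [hbot, finrank_bot] at this
    lia
  · have := hd.mul_card_edgeSet_add_two_le hbot fun z ↦ four_le_card_support_of_mem_cycleSpace hG
    lia

end AbstractDual

section MinorModel

variable {U V W : Type*} {G : SimpleGraph V} {Γ : SimpleGraph W}

/-- A model of `G` as a minor of `Γ` with finite branch sets: pairwise disjoint finite connected
sets `branch v` and, for every edge `e` of `G`, an edge of `Γ` joining the branch sets of its
ends. -/
structure MinorModel (G : SimpleGraph V) (Γ : SimpleGraph W) where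
  branch : V → Set W
  branch_finite : ∀ v, (branch v).Finite
  branch_connected : ∀ v, (Γ.induce (branch v)).Connected
  branch_disjoint : Pairwise (Function.onFun Disjoint branch)
  edge : G.edgeSet → Sym2 W
  edge_mem : ∀ e, edge e ∈ Γ.edgeSet
  mem_iff : ∀ e v, v ∈ e.1 ↔ ∃ c ∈ edge e, c ∈ branch v

namespace MinorModel

variable (M : MinorModel G Γ)

/-- The model induced along an injective homomorphism; in particular, for subgraphs. -/
def comap {G' : SimpleGraph U} (φ : G' →g G) (hφ : Function.Injective φ) : MinorModel G' Γ where
  branch v := M.branch (φ v)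
  branch_finite v := M.branch_finite (φ v)
  branch_connected v := M.branch_connected (φ v)
  branch_disjoint := M.branch_disjoint.comp_of_injective hφ
  edge e := M.edge (φ.mapEdgeSet e)
  edge_mem e := M.edge_mem (φ.mapEdgeSet e)
  mem_iff e v := by
    rw [← M.mem_iff]
    simp [Hom.mapEdgeSet, Sym2.mem_map, hφ.eq_iff]

lemma edge_injective : Function.Injective M.edge := fun e e' h ↦
  Subtype.ext <| Sym2.ext fun v ↦ by rw [M.mem_iff, M.mem_iff, h]

lemma exists_edge_eq {e : G.edgeSet} {u v : V} (he : e.1 = s(u, v)) :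
    ∃ c ∈ M.branch u, ∃ d ∈ M.branch v, M.edge e = s(c, d) := by
  have huv : u ≠ v := G.ne_of_adj (G.mem_edgeSet.1 (he ▸ e.2))
  obtain ⟨c, hce, hc⟩ := (M.mem_iff e u).1 (by simp [he])
  obtain ⟨d, hde, hd⟩ := (M.mem_iff e v).1 (by simp [he])
  have hcd : c ≠ d := (M.branch_disjoint huv).ne_of_mem hc hd
  exact ⟨c, hc, d, hd, (Sym2.mem_and_mem_iff hcd).1 ⟨hce, hde⟩⟩

lemma exists_mem_edge_notMem_branch (e : G.edgeSet) (v : V) :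
    ∃ c ∈ M.edge e, c ∉ M.branch v := by
  obtain ⟨⟨u, w⟩, he⟩ := e
  obtain ⟨c, hc, d, hd, hcd⟩ := M.exists_edge_eq (e := ⟨s(u, w), he⟩) rfl
  rcases eq_or_ne v u with rfl | hvu
  · exact ⟨d, by rw [hcd]; simp, (M.branch_disjoint (G.ne_of_adj he)).notMem_of_mem_right hd⟩
  · exact ⟨c, by rw [hcd]; simp, (M.branch_disjoint hvu.symm).notMem_of_mem_left hc⟩

end MinorModel

lemma exists_adj_walk_notMem {A : Set W} {c d : W} (p : Γ.Walk c d) (hA : ∃ w ∈ p.support, w ∈ A)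
    (hd : d ∉ A) :
    ∃ x ∈ A, ∃ y, Γ.Adj x y ∧ ∃ q : Γ.Walk y d, ∀ w ∈ q.support, w ∈ p.support ∧ w ∉ A := by
  induction p with
  | nil => simp_all
  | @cons c y d hcy p ih =>
    by_cases hp : ∃ w ∈ p.support, w ∈ A
    · obtain ⟨x, hx, y', hxy, q, hq⟩ := ih hp hd
      exact ⟨x, hx, y', hxy, q, fun w hw ↦ ⟨List.mem_cons_of_mem c (hq w hw).1, (hq w hw).2⟩⟩
    · have hc : c ∈ A := by simp_all
      exact ⟨c, hc, y, hcy, p, fun w hw ↦ ⟨List.mem_cons_of_mem c hw, fun hwA ↦ hp ⟨w, hw, hwA⟩⟩⟩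

lemma exists_adj_connected_disjoint {A P Q : Set W} (hQ : (Γ.induce Q).Connected)
    (hAQ : (Q ∩ A).Nonempty) (hPQ : (Q ∩ P).Nonempty) (hAP : Disjoint A P) :
    ∃ x ∈ A, ∃ T ⊆ Q, T.Finite ∧ (Γ.induce T).Connected ∧ Disjoint T A ∧ (T ∩ P).Nonempty ∧
      ∃ y ∈ T, Γ.Adj x y := by
  obtain ⟨c, hcQ, hcA⟩ := hAQ
  obtain ⟨d, hdQ, hdP⟩ := hPQ
  obtain ⟨p⟩ := hQ.preconnected ⟨c, hcQ⟩ ⟨d, hdQ⟩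
  let p' := p.map (Embedding.induce Q).toHom
  obtain ⟨x, hx, y, hxy, q, hq⟩ := exists_adj_walk_notMem p' ⟨c, p'.start_mem_support, hcA⟩
    (hAP.notMem_of_mem_right hdP)
  refine ⟨x, hx, {w | w ∈ q.support}, fun w hw ↦ ?_, q.support.finite_toSet,
    q.connected_induce_support, Set.disjoint_left.2 fun w hw ↦ (hq w hw).2,
    ⟨d, q.end_mem_support, hdP⟩, y, q.start_mem_support, hxy⟩
  obtain ⟨⟨w', hwQ⟩, -, rfl⟩ := List.mem_map.1 (Walk.support_map _ p ▸ (hq w hw).1)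
  exact hwQ

/-- Each channel `Q e` is cut down to its part after the last visit of `P (tail e)`, which is then
absorbed into the branch set of `head e`. -/
lemma nonempty_minorModel_of_channels [Finite V] {tail head : G.edgeSet → V}
    (ends : ∀ e : G.edgeSet, e.1 = s(tail e, head e)) {P : V → Set W} {Q : G.edgeSet → Set W}
    (P_finite : ∀ v, (P v).Finite) (P_connected : ∀ v, (Γ.induce (P v)).Connected)
    (P_disjoint : Pairwise (Function.onFun Disjoint P))
    (Q_connected : ∀ e, (Γ.induce (Q e)).Connected)
    (tail_meets : ∀ e, (Q e ∩ P (tail e)).Nonempty) (head_meets : ∀ e, (Q e ∩ P (head e)).Nonempty)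
    (QP_disjoint : ∀ e v, v ≠ tail e → v ≠ head e → Disjoint (Q e) (P v))
    (Q_disjoint : ∀ e e', head e ≠ head e' → Disjoint (Q e) (Q e')) :
    Nonempty (MinorModel G Γ) := by
  have tail_ne_head (e : G.edgeSet) : tail e ≠ head e :=
    G.ne_of_adj (G.mem_edgeSet.1 (ends e ▸ e.2))
  choose x x_mem T T_subset T_finite T_connected T_disjoint T_meets y y_mem hxy using fun e ↦
    exists_adj_connected_disjoint (Q_connected e) (tail_meets e) (head_meets e)
      (P_disjoint (tail_ne_head e))
  have PT_disjoint {v : V} {e : G.edgeSet} (hv : v ≠ head e) : Disjoint (P v) (T e) := by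
    rcases eq_or_ne v (tail e) with rfl | hv'
    · exact (T_disjoint e).symm
    · exact ((QP_disjoint e v hv' hv).mono_left (T_subset e)).symm
  let B v := P v ∪ ⋃ e : {e // head e = v}, T e
  have T_subset_B (e) : T e ⊆ B (head e) :=
    fun w hw ↦ Or.inr (Set.mem_iUnion.2 ⟨⟨e, rfl⟩, hw⟩)
  have B_connected (v : V) : (Γ.induce (B v)).Connected := by
    obtain ⟨⟨w, hw⟩⟩ := (P_connected v).nonempty
    refine induce_connected_of_patches w (Or.inl hw) fun {w'} hw' ↦ ?_
    rcases hw' with hw' | hw'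
    · exact ⟨P v, Set.subset_union_left, hw, hw', (P_connected v).preconnected _ _⟩
    · obtain ⟨⟨e, rfl⟩, hw'⟩ := Set.mem_iUnion.1 hw'
      exact ⟨P (head e) ∪ T e, Set.union_subset Set.subset_union_left (T_subset_B e), Or.inl hw,
        Or.inr hw', induce_union_connected (P_connected _).preconnected
          (T_connected e).preconnected (Set.inter_comm _ _ ▸ T_meets e) |>.preconnected _ _⟩
  have B_disjoint : Pairwise (Function.onFun Disjoint B) := by
    intro u v huv
    simp only [Function.onFun, B, Set.disjoint_union_left, Set.disjoint_union_right,
      Set.disjoint_iUnion_left, Set.disjoint_iUnion_right]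
    refine ⟨⟨P_disjoint huv, ?_⟩, ?_⟩
    · rintro ⟨e, rfl⟩
      exact (PT_disjoint huv.symm).symm
    · rintro ⟨e, rfl⟩
      refine ⟨PT_disjoint huv, ?_⟩
      rintro ⟨e', rfl⟩
      exact (Q_disjoint _ _ huv).mono (T_subset e') (T_subset e)
  have x_mem_B (e) : x e ∈ B (tail e) := Or.inl (x_mem e)
  have y_mem_B (e) : y e ∈ B (head e) := T_subset_B e (y_mem e)
  have eq_of_mem {c : W} {u v : V} (hu : c ∈ B u) (hv : c ∈ B v) : v = u :=
    B_disjoint.eq (Set.not_disjoint_iff.2 ⟨c, hv, hu⟩)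
  refine ⟨{
    branch := B
    branch_finite v := (P_finite v).union (Set.finite_iUnion fun e ↦ T_finite e.1)
    branch_connected := B_connected
    branch_disjoint := B_disjoint
    edge e := s(x e, y e)
    edge_mem := hxy
    mem_iff e v := ?_ }⟩
  simp only [ends e, Sym2.mem_iff, or_and_right, exists_or, exists_eq_left]
  refine or_congr ⟨?_, eq_of_mem (x_mem_B e)⟩ ⟨?_, eq_of_mem (y_mem_B e)⟩
  · rintro rfl
    exact x_mem_B e
  · rintro rfl
    exact y_mem_B e

end MinorModel

section EdgeBoundary

open Finset

variable {V W : Type*} [DecidableEq W] {Γ : SimpleGraph W} [Γ.LocallyFinite]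

/-- The finite set of the edges of `Γ` with exactly one end in `B`. -/
def edgeBoundary (Γ : SimpleGraph W) [Γ.LocallyFinite] (B : Finset W) : Finset (Sym2 W) :=
  {ε ∈ B.biUnion fun c ↦ Γ.incidenceFinset c | ¬ ε.toFinset ⊆ B}

lemma mem_edgeBoundary {B : Finset W} {ε : Sym2 W} :
    ε ∈ edgeBoundary Γ B ↔ ε ∈ Γ.edgeSet ∧ (∃ c ∈ ε, c ∈ B) ∧ ∃ d ∈ ε, d ∉ B := by
  simp only [edgeBoundary, mem_filter, mem_biUnion, mem_incidenceFinset, incidenceSet,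
    Finset.not_subset, Sym2.mem_toFinset]
  grind

lemma sum_edgeBoundary_eq_zero {w : Sym2 W → ZMod 2} {B : Finset W}
    (hw : ∀ c ∈ B, ∑ ε ∈ Γ.incidenceFinset c, w ε = 0) : ∑ ε ∈ edgeBoundary Γ B, w ε = 0 := by
  have swap : ∑ c ∈ B, ∑ ε ∈ Γ.incidenceFinset c, w ε =
      ∑ ε ∈ B.biUnion fun c ↦ Γ.incidenceFinset c, ∑ c ∈ B with c ∈ ε, w ε :=
    sum_comm' fun c ε ↦ by simp [incidenceSet]; grind
  rw [← sum_eq_zero hw, swap, edgeBoundary, sum_filter]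
  refine sum_congr rfl fun ε hε ↦ ?_
  obtain ⟨c, hc, hcε⟩ := mem_biUnion.1 hε
  obtain ⟨hε, hcε⟩ := (mem_incidenceFinset _ _ _).1 hcε
  induction ε with | _ a b
  have hab : a ≠ b := Γ.ne_of_adj hε
  have ends : {c ∈ B | c ∈ s(a, b)} = {c ∈ ({a, b} : Finset W) | c ∈ B} := by
    ext; simp [and_comm]
  rw [ends, sum_filter, sum_pair hab]
  have := CharTwo.add_self_eq_zero (w s(a, b))
  grind [Sym2.mem_toFinset]

end EdgeBoundary

section GridGraph

open Finset

/-- The square grid: the graph on `ℤ × ℤ` joining points at distance one. -/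
noncomputable abbrev gridGraph : SimpleGraph (ℤ × ℤ) := hasse (ℤ × ℤ)

lemma gridGraph_adj {a b a' b' : ℤ} : gridGraph.Adj (a, b) (a', b') ↔
    b = b' ∧ (a + 1 = a' ∨ a' + 1 = a) ∨ a = a' ∧ (b + 1 = b' ∨ b' + 1 = b) := by
  simp only [hasse_adj, Prod.mk_covBy_mk_iff, Order.covBy_iff_add_one_eq]
  grind

lemma mem_edgeSet_gridGraph {ε : Sym2 (ℤ × ℤ)} : ε ∈ gridGraph.edgeSet ↔
    ∃ a b, ε = s((a, b), (a + 1, b)) ∨ ε = s((a, b), (a, b + 1)) := by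
  refine ⟨?_, ?_⟩
  · induction ε with | _ c d
    obtain ⟨a, b⟩ := c
    obtain ⟨a', b'⟩ := d
    rw [mem_edgeSet, gridGraph_adj]
    rintro (⟨rfl, rfl | rfl⟩ | ⟨rfl, rfl | rfl⟩)
    · exact ⟨a, b, Or.inl rfl⟩
    · exact ⟨a', b, Or.inl Sym2.eq_swap⟩
    · exact ⟨a, b, Or.inr rfl⟩
    · exact ⟨a, b', Or.inr Sym2.eq_swap⟩
  · rintro ⟨a, b, rfl | rfl⟩ <;> simp

noncomputable instance : gridGraph.LocallyFinite := fun c ↦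
  Fintype.ofFinset {(c.1 + 1, c.2), (c.1 - 1, c.2), (c.1, c.2 + 1), (c.1, c.2 - 1)} <| by
    obtain ⟨a, b⟩ := c
    rintro ⟨a', b'⟩
    simp only [mem_insert, mem_singleton, Prod.mk.injEq, mem_neighborSet, gridGraph_adj]
    omega

lemma incidenceFinset_gridGraph (a b : ℤ) : gridGraph.incidenceFinset (a, b) =
    {s((a, b), (a + 1, b)), s((a - 1, b), (a, b)), s((a, b), (a, b + 1)),
      s((a, b - 1), (a, b))} := by
  ext ε
  rw [mem_incidenceFinset, incidenceSet, Set.mem_sep_iff, mem_edgeSet_gridGraph]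
  simp only [mem_insert, mem_singleton]
  refine ⟨?_, ?_⟩
  · rintro ⟨⟨a', b', rfl | rfl⟩, h⟩ <;> rw [Sym2.mem_iff] at h <;> rcases h with h | h <;>
      obtain ⟨rfl, rfl⟩ := Prod.mk.inj h <;> simp
  · rintro (rfl | rfl | rfl | rfl)
    · exact ⟨⟨a, b, by simp⟩, by simp⟩
    · exact ⟨⟨a - 1, b, by simp⟩, by simp⟩
    · exact ⟨⟨a, b, by simp⟩, by simp⟩
    · exact ⟨⟨a, b - 1, by simp⟩, by simp⟩

/-- One of the two unit squares beside the grid edge `ε`. A square stands for its lower left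
corner. -/
def upperSquare (ε : Sym2 (ℤ × ℤ)) : ℤ × ℤ := ε.inf

/-- The other square beside `ε`: below `ε` if `ε` is horizontal, to its left if `ε` is vertical. -/
def lowerSquare (ε : Sym2 (ℤ × ℤ)) : ℤ × ℤ := ε.inf - (ε.sup - ε.inf).swap

/-- The difference, modulo two, of the labels which `h` gives to the squares on the two sides of
the grid edge `ε`. -/
def jump (h : ℤ × ℤ → ZMod 2) (ε : Sym2 (ℤ × ℤ)) : ZMod 2 := h (upperSquare ε) + h (lowerSquare ε)

@[simp] lemma jump_horizontal (h : ℤ × ℤ → ZMod 2) (a b : ℤ) :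
    jump h s((a, b), (a + 1, b)) = h (a, b) + h (a, b - 1) := by
  simp [jump, upperSquare, lowerSquare]

@[simp] lemma jump_vertical (h : ℤ × ℤ → ZMod 2) (a b : ℤ) :
    jump h s((a, b), (a, b + 1)) = h (a, b) + h (a - 1, b) := by
  simp [jump, upperSquare, lowerSquare]

lemma sum_jump_incidenceFinset (h : ℤ × ℤ → ZMod 2) (c : ℤ × ℤ) :
    ∑ ε ∈ gridGraph.incidenceFinset c, jump h ε = 0 := by
  obtain ⟨a, b⟩ := c
  have left := jump_horizontal h (a - 1) b
  have down := jump_vertical h a (b - 1)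
  rw [sub_add_cancel] at left down
  rw [incidenceFinset_gridGraph, sum_insert (by simp; omega), sum_insert (by simp),
    sum_insert (by simp; omega), sum_singleton, jump_horizontal, jump_vertical, left, down]
  have double (t : ZMod 2) : t + t = 0 := CharTwo.add_self_eq_zero t
  linear_combination double (h (a, b)) + double (h (a, b - 1)) + double (h (a - 1, b)) +
    double (h (a - 1, b - 1))

/-- The indicator of the grid edges on the horizontal ray which starts in `c` and goes right. -/
def edgeRay (c : ℤ × ℤ) (ε : Sym2 (ℤ × ℤ)) : ZMod 2 :=
  if ε.inf.2 = ε.sup.2 ∧ ε.inf.2 = c.2 ∧ c.1 ≤ ε.inf.1 then 1 else 0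

/-- The indicator of the squares which lie to the right of the vertical grid edge `ε`; nothing lies
to the right of a horizontal edge. -/
def rightShadow (ε : Sym2 (ℤ × ℤ)) (s : ℤ × ℤ) : ZMod 2 :=
  if ε.inf.1 = ε.sup.1 ∧ s.2 = ε.inf.2 ∧ ε.inf.1 ≤ s.1 then 1 else 0

lemma jump_rightShadow {c d : ℤ × ℤ} (hcd : gridGraph.Adj c d) {ε : Sym2 (ℤ × ℤ)}
    (hε : ε ∈ gridGraph.edgeSet) : jump (rightShadow s(c, d)) ε =
      (if ε = s(c, d) then 1 else 0) + (edgeRay c ε + edgeRay d ε) := by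
  obtain ⟨a, b⟩ := c
  obtain ⟨a', b'⟩ := d
  rw [gridGraph_adj] at hcd
  obtain ⟨x, y, rfl | rfl⟩ := mem_edgeSet_gridGraph.1 hε <;>
  rcases hcd with ⟨rfl, rfl | rfl⟩ | ⟨rfl, rfl | rfl⟩ <;>
  simp only [rightShadow, edgeRay, jump_horizontal, jump_vertical, Sym2.inf_mk, Sym2.sup_mk,
    Prod.mk_inf_mk, Prod.mk_sup_mk, Sym2.eq_iff, Prod.mk.injEq] <;>
  split_ifs <;> grind

lemma exists_jump_eq_edgeRay {B : Set (ℤ × ℤ)} {c d : B}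
    (p : (gridGraph.induce B).Walk c d) : ∃ h : ℤ × ℤ → ZMod 2, ∀ ε ∈ gridGraph.edgeSet,
      (∃ x ∈ ε, x ∉ B) → jump h ε = edgeRay c ε + edgeRay d ε := by
  induction p with
  | @nil c =>
    exact ⟨0, fun ε _ _ ↦ by simp [jump, CharTwo.add_self_eq_zero]⟩
  | @cons c c' d hcc' _ ih =>
    obtain ⟨h, hh⟩ := ih
    refine ⟨rightShadow s(c, c') + h, fun ε hε hεB ↦ ?_⟩
    have ne : ε ≠ s(↑c, ↑c') := by
      rintro rfl
      obtain ⟨x, hx, hxB⟩ := hεB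
      rcases Sym2.mem_iff.1 hx with rfl | rfl
      exacts [hxB c.2, hxB c'.2]
    have first := jump_rightShadow (c := c) (d := c') hcc' hε
    rw [if_neg ne] at first
    have rest := hh ε hε hεB
    have cancel := CharTwo.add_self_eq_zero (edgeRay c' ε)
    simp only [jump, Pi.add_apply] at first rest ⊢
    linear_combination first + rest + cancel

end GridGraph

namespace MinorModel

open Finset

section DeletedEdges

variable {V W : Type*} {G : SimpleGraph V} {Γ : SimpleGraph W} (M : MinorModel G Γ)

/-- The edges of `Γ` which are neither contracted, i.e. inside a branch set, nor kept as edges of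
`G`. -/
def deletedEdges : Set (Sym2 W) :=
  {ε ∈ Γ.edgeSet | (∀ v, ∃ c ∈ ε, c ∉ M.branch v) ∧ ε ∉ Set.range M.edge}

lemma comp_edge_mem_cycleSpace [Fintype V] [DecidableEq V] [DecidableRel G.Adj] [DecidableEq W]
    [Γ.LocallyFinite] {w : Sym2 W → ZMod 2} (hw : ∀ c, ∑ ε ∈ Γ.incidenceFinset c, w ε = 0)
    (hdel : ∀ ε ∈ M.deletedEdges, w ε = 0) : w ∘ M.edge ∈ cycleSpace G := by
  rw [mem_cycleSpace]
  intro v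
  let B := (M.branch_finite v).toFinset
  have image_subset : ({e | v ∈ e.1} : Finset G.edgeSet).image M.edge ⊆ edgeBoundary Γ B := by
    intro ε hε
    obtain ⟨e, he, rfl⟩ := mem_image.1 hε
    refine mem_edgeBoundary.2 ⟨M.edge_mem e, ?_, ?_⟩
    · simpa [B] using (M.mem_iff e v).1 (mem_filter.1 he).2
    · simpa [B] using M.exists_mem_edge_notMem_branch e v
  rw [← sum_edgeBoundary_eq_zero (fun c (_ : c ∈ B) ↦ hw c), ← sum_subset image_subset,
    sum_image M.edge_injective.injOn]
  · rfl
  · intro ε hε hεG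
    obtain ⟨hεΓ, ⟨c, hcε, hc⟩, d, hdε, hd⟩ := mem_edgeBoundary.1 hε
    simp only [B, Set.Finite.mem_toFinset] at hc hd
    refine hdel ε ⟨hεΓ, fun u ↦ ?_, ?_⟩
    · rcases eq_or_ne u v with rfl | huv
      · exact ⟨d, hdε, hd⟩
      · exact ⟨c, hcε, (M.branch_disjoint huv).notMem_of_mem_right hc⟩
    · rintro ⟨e, rfl⟩
      exact hεG (mem_image_of_mem _ (by simpa using (M.mem_iff e v).2 ⟨c, hcε, hc⟩))

end DeletedEdges

variable {V : Type*} {G : SimpleGraph V} [Fintype V] [DecidableEq V]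
  (M : MinorModel G gridGraph)

lemma exists_jump_eq_of_edge (ρ : ∀ v, M.branch v) (e : G.edgeSet) :
    ∃ h : ℤ × ℤ → ZMod 2, ∀ ε ∈ gridGraph.edgeSet, (∀ v, ∃ c ∈ ε, c ∉ M.branch v) →
      jump h ε = (if ε = M.edge e then 1 else 0) + ∑ v with v ∈ e.1, edgeRay (ρ v) ε := by
  obtain ⟨⟨u, v⟩, he⟩ := e
  have huv : u ≠ v := G.ne_of_adj he
  obtain ⟨c, hc, d, hd, hcd⟩ := M.exists_edge_eq (e := ⟨s(u, v), he⟩) rfl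
  obtain ⟨p⟩ := (M.branch_connected u).preconnected (ρ u) ⟨c, hc⟩
  obtain ⟨q⟩ := (M.branch_connected v).preconnected (ρ v) ⟨d, hd⟩
  obtain ⟨h, hh⟩ := exists_jump_eq_edgeRay p
  obtain ⟨k, hk⟩ := exists_jump_eq_edgeRay q
  refine ⟨h + rightShadow s(c, d) + k, fun ε hε hεB ↦ ?_⟩
  have hcd_adj : gridGraph.Adj c d := by simpa [hcd, -hasse_adj] using M.edge_mem ⟨s(u, v), he⟩
  have first := hh ε hε (hεB u)
  have middle := jump_rightShadow hcd_adj hε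
  have last := hk ε hε (hεB v)
  have ends : ({w | w ∈ s(u, v)} : Finset V) = {u, v} := by ext; simp
  have cancel_c := CharTwo.add_self_eq_zero (edgeRay c ε)
  have cancel_d := CharTwo.add_self_eq_zero (edgeRay d ε)
  change _ = (if ε = M.edge ⟨s(u, v), he⟩ then 1 else 0) + ∑ w with w ∈ s(u, v), edgeRay (ρ w) ε
  rw [ends, sum_pair huv, hcd]
  simp only [jump, Pi.add_apply] at first middle last ⊢
  linear_combination first + middle + last + cancel_c + cancel_d

/-- The rays of the single edges cancel at every base point because `z` is a cycle. -/
lemma exists_jump_eq_of_mem_cycleSpace [DecidableRel G.Adj] {z : G.edgeSet → ZMod 2}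
    (hz : z ∈ cycleSpace G) : ∃ h : ℤ × ℤ → ZMod 2,
      (∀ e, jump h (M.edge e) = z e) ∧ ∀ ε ∈ M.deletedEdges, jump h ε = 0 := by
  let ρ (v : V) : M.branch v := (M.branch_connected v).nonempty.some
  choose k hk using M.exists_jump_eq_of_edge ρ
  have jump_sum (ε : Sym2 (ℤ × ℤ)) (hε : ε ∈ gridGraph.edgeSet)
      (hεB : ∀ v, ∃ c ∈ ε, c ∉ M.branch v) :
      jump (∑ e, z e • k e) ε = ∑ e, z e * if ε = M.edge e then 1 else 0 := by
    have rays : ∑ e, z e * ∑ v with v ∈ e.1, edgeRay (ρ v) ε = 0 := by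
      simp only [sum_filter, mul_sum]
      rw [sum_comm]
      refine sum_eq_zero fun v _ ↦ ?_
      simpa [sum_filter, sum_mul, ite_mul] using
        congr($(mem_cycleSpace.1 hz v) * edgeRay (ρ v) ε)
    calc jump (∑ e, z e • k e) ε = ∑ e, z e * jump (k e) ε := by
          simp [jump, mul_add, sum_add_distrib]
      _ = ∑ e, (z e * (if ε = M.edge e then 1 else 0) +
            z e * ∑ v with v ∈ e.1, edgeRay (ρ v) ε) :=
          sum_congr rfl fun e _ ↦ by rw [hk e ε hε hεB, mul_add]
      _ = ∑ e, z e * if ε = M.edge e then 1 else 0 := by rw [sum_add_distrib, rays, add_zero]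
  refine ⟨∑ e, z e • k e, fun e ↦ ?_, fun ε hε ↦ ?_⟩
  · rw [jump_sum _ (M.edge_mem e) (M.exists_mem_edge_notMem_branch e)]
    simp [M.edge_injective.eq_iff]
  · rw [jump_sum ε hε.1 hε.2.1]
    exact sum_eq_zero fun e _ ↦ by rw [if_neg fun h ↦ hε.2.2 ⟨e, h.symm⟩, mul_zero]

/-- The faces are the classes of squares which can be reached from one another by crossing deleted
grid edges. -/
lemma exists_isAbstractDual [DecidableRel G.Adj] (M : MinorModel G gridGraph) :
    ∃ (F : Type) (l r : G.edgeSet → F), IsAbstractDual G l r := by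
  let crossing (s t : ℤ × ℤ) : Prop :=
    ∃ ε ∈ M.deletedEdges, s = upperSquare ε ∧ t = lowerSquare ε
  refine ⟨Quot crossing, fun e ↦ Quot.mk _ (upperSquare (M.edge e)),
    fun e ↦ Quot.mk _ (lowerSquare (M.edge e)), fun z ↦ ⟨fun hz ↦ ?_, ?_⟩⟩
  · obtain ⟨h, hh, hdel⟩ := M.exists_jump_eq_of_mem_cycleSpace hz
    refine ⟨Quot.lift h ?_, fun e ↦ (hh e).symm⟩
    rintro _ _ ⟨ε, hε, rfl, rfl⟩
    exact CharTwo.add_eq_zero.1 (hdel ε hε)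
  · rintro ⟨h, hh⟩
    have z_eq : z = jump (h ∘ Quot.mk crossing) ∘ M.edge := funext hh
    rw [z_eq]
    refine M.comp_edge_mem_cycleSpace (sum_jump_incidenceFinset _) fun ε hε ↦ ?_
    have same_face : Quot.mk crossing (upperSquare ε) = Quot.mk crossing (lowerSquare ε) :=
      Quot.sound ⟨ε, hε, rfl, rfl⟩
    simp [jump, same_face, CharTwo.add_self_eq_zero]

end MinorModel

lemma MinorModel.card_edgeSet_add_four_le {V : Type*} {G : SimpleGraph V} [Fintype V]
    [Fintype G.edgeSet] (M : MinorModel G gridGraph) (hG : G.CliqueFree 3)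
    (hV : 3 ≤ Fintype.card V) : Fintype.card G.edgeSet + 4 ≤ 2 * Fintype.card V := by
  classical
  obtain ⟨F, l, r, hd⟩ := M.exists_isAbstractDual
  convert hd.card_edgeSet_add_four_le hG hV

section GridNhd

open Filter Metric Topology

/-- The point of the plane which `c` represents in the square grid of mesh `δ`. -/
def gridPoint (δ : ℝ) (c : ℤ × ℤ) : ℝ × ℝ := (δ * c.1, δ * c.2)

/-- The discretization of `S` at mesh `δ`: the grid points at sup-distance less than `δ` from
`S`. -/
def gridNhd (δ : ℝ) (S : Set (ℝ × ℝ)) : Set (ℤ × ℤ) := {c | gridPoint δ c ∈ thickening δ S}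

variable {δ : ℝ} {S T : Set (ℝ × ℝ)} {s : ℝ × ℝ} {c : ℤ × ℤ}

lemma gridNhd_mono (h : S ⊆ T) : gridNhd δ S ⊆ gridNhd δ T := fun _ hc ↦
  thickening_subset_of_subset δ h hc

lemma mem_gridNhd_iff_exists : c ∈ gridNhd δ S ↔ ∃ s ∈ S, c ∈ gridNhd δ {s} := by
  simp [gridNhd, mem_thickening_iff]

lemma mem_gridNhd_singleton :
    c ∈ gridNhd δ {s} ↔ |δ * c.1 - s.1| < δ ∧ |δ * c.2 - s.2| < δ := by
  simp [gridNhd, gridPoint, Prod.dist_eq, Real.dist_eq]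

lemma abs_mul_floor_sub_lt (hδ : 0 < δ) (x : ℝ) : |δ * ⌊x / δ⌋ - x| < δ := by
  have lower := Int.floor_le (x / δ)
  have upper := Int.lt_floor_add_one (x / δ)
  rw [le_div_iff₀ hδ] at lower
  rw [div_lt_iff₀ hδ] at upper
  rw [abs_lt]
  constructor <;> linarith

lemma eq_floor_or_eq_floor_add_one (hδ : 0 < δ) {x : ℝ} {z : ℤ} (h : |δ * z - x| < δ) :
    z = ⌊x / δ⌋ ∨ z = ⌊x / δ⌋ + 1 := by
  rw [abs_lt] at h
  have lower : ⌊x / δ⌋ < z + 1 := by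
    rw [Int.floor_lt, div_lt_iff₀ hδ]
    push_cast
    linarith
  have upper : z - 1 ≤ ⌊x / δ⌋ := by
    rw [Int.le_floor, le_div_iff₀ hδ]
    push_cast
    linarith
  omega

lemma floor_mem_gridNhd (hδ : 0 < δ) (s : ℝ × ℝ) :
    (⌊s.1 / δ⌋, ⌊s.2 / δ⌋) ∈ gridNhd δ {s} :=
  mem_gridNhd_singleton.2 ⟨abs_mul_floor_sub_lt hδ _, abs_mul_floor_sub_lt hδ _⟩

lemma gridNhd_inter_nonempty (hδ : 0 < δ) (hST : (S ∩ T).Nonempty) :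
    (gridNhd δ S ∩ gridNhd δ T).Nonempty := by
  obtain ⟨s, hS, hT⟩ := hST
  exact ⟨_, gridNhd_mono (Set.singleton_subset_iff.2 hS) (floor_mem_gridNhd hδ s),
    gridNhd_mono (Set.singleton_subset_iff.2 hT) (floor_mem_gridNhd hδ s)⟩

lemma gridNhd_singleton_connected (hδ : 0 < δ) (s : ℝ × ℝ) :
    (gridGraph.induce (gridNhd δ {s})).Connected := by
  rw [connected_iff_exists_forall_reachable]
  refine ⟨⟨_, floor_mem_gridNhd hδ s⟩, ?_⟩
  rintro ⟨⟨a, b⟩, hc⟩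
  obtain ⟨ha, hb⟩ := mem_gridNhd_singleton.1 hc
  have corner : (⌊s.1 / δ⌋, b) ∈ gridNhd δ {s} :=
    mem_gridNhd_singleton.2 ⟨abs_mul_floor_sub_lt hδ _, hb⟩
  refine Reachable.trans (v := ⟨_, corner⟩) ?_ ?_
  · rcases eq_floor_or_eq_floor_add_one hδ hb with rfl | rfl
    · rfl
    · exact Adj.reachable (gridGraph_adj.2 (by simp))
  · rcases eq_floor_or_eq_floor_add_one hδ ha with rfl | rfl
    · rfl
    · exact Adj.reachable (gridGraph_adj.2 (by simp))

lemma gridNhd_union_connected (hδ : 0 < δ) {s t : ℝ × ℝ}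
    (hst : (⌊s.1 / δ⌋, ⌊s.2 / δ⌋) ∈ gridNhd δ {t}) :
    (gridGraph.induce (gridNhd δ {s} ∪ gridNhd δ {t})).Connected :=
  induce_union_connected (gridNhd_singleton_connected hδ s).preconnected
    (gridNhd_singleton_connected hδ t).preconnected ⟨_, floor_mem_gridNhd hδ s, hst⟩

lemma eventually_mem_gridNhd (h : c ∈ gridNhd δ {s}) : ∀ᶠ t in 𝓝 s, c ∈ gridNhd δ {t} := by
  simp only [gridNhd, Set.mem_ofPred_eq, mem_thickening_iff, Set.mem_singleton_iff,
    exists_eq_left] at h ⊢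
  exact (continuous_const.dist continuous_id).continuousAt.eventually_lt_const h

lemma gridNhd_connected (hδ : 0 < δ) (hS : IsConnected S) :
    (gridGraph.induce (gridNhd δ S)).Connected := by
  have chain {s t : ℝ × ℝ} (hs : s ∈ S) (ht : t ∈ S) : ∃ R ⊆ gridNhd δ S,
      gridNhd δ {s} ⊆ R ∧ gridNhd δ {t} ⊆ R ∧ (gridGraph.induce R).Connected := by
    refine hS.isPreconnected.induction₂ (fun s t ↦ ∃ R ⊆ gridNhd δ S,
      gridNhd δ {s} ⊆ R ∧ gridNhd δ {t} ⊆ R ∧ (gridGraph.induce R).Connected) ?_ ?_ ?_ hs ht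
    · intro x hx
      filter_upwards [nhdsWithin_le_nhds (eventually_mem_gridNhd (floor_mem_gridNhd hδ x)),
        self_mem_nhdsWithin] with y hxy hy
      exact ⟨_, Set.union_subset (gridNhd_mono (Set.singleton_subset_iff.2 hx))
        (gridNhd_mono (Set.singleton_subset_iff.2 hy)), Set.subset_union_left,
        Set.subset_union_right, gridNhd_union_connected hδ hxy⟩
    · rintro x y z - - - ⟨R, hR, hxR, hyR, R_connected⟩ ⟨R', hR', hyR', hzR', R'_connected⟩
      exact ⟨R ∪ R', Set.union_subset hR hR', hxR.trans Set.subset_union_left,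
        hzR'.trans Set.subset_union_right, induce_union_connected R_connected.preconnected
          R'_connected.preconnected
          ⟨_, hyR (floor_mem_gridNhd hδ y), hyR' (floor_mem_gridNhd hδ y)⟩⟩
    · rintro x y - - ⟨R, hR, hxR, hyR, R_connected⟩
      exact ⟨R, hR, hyR, hxR, R_connected⟩
  obtain ⟨s, hs⟩ := hS.nonempty
  refine induce_connected_of_patches (⌊s.1 / δ⌋, ⌊s.2 / δ⌋)
    (mem_gridNhd_iff_exists.2 ⟨s, hs, floor_mem_gridNhd hδ s⟩) fun {d} hd ↦ ?_
  obtain ⟨t, ht, hdt⟩ := mem_gridNhd_iff_exists.1 hd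
  obtain ⟨R, hR, hsR, htR, R_connected⟩ := chain hs ht
  exact ⟨R, hR, hsR (floor_mem_gridNhd hδ s), htR hdt, R_connected.preconnected _ _⟩

lemma isClosedEmbedding_gridPoint (hδ : δ ≠ 0) : IsClosedEmbedding (gridPoint δ) :=
  (Homeomorph.smulOfNeZero δ hδ).isClosedEmbedding.comp
    (Int.isClosedEmbedding_coe_real.prodMap Int.isClosedEmbedding_coe_real)

lemma gridNhd_finite (hδ : δ ≠ 0) (hS : Bornology.IsBounded S) : (gridNhd δ S).Finite :=
  ((isClosedEmbedding_gridPoint hδ).isCompact_preimage hS.thickening.isCompact_closure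
    |>.finite_of_discrete).subset fun _ hc ↦ subset_closure hc

lemma exists_forall_disjoint_gridNhd {ι : Type*} [Finite ι] {K : ι → Set (ℝ × ℝ)}
    (hK : ∀ i, IsCompact (K i)) :
    ∃ δ > 0, ∀ i j, Disjoint (K i) (K j) → Disjoint (gridNhd δ (K i)) (gridNhd δ (K j)) := by
  have eventually_disjoint (i j : ι) : ∀ᶠ δ in 𝓝[>] (0 : ℝ),
      Disjoint (K i) (K j) → Disjoint (gridNhd δ (K i)) (gridNhd δ (K j)) := by
    by_cases hij : Disjoint (K i) (K j)
    · obtain ⟨ε, hε, h⟩ := hij.exists_thickenings (hK i) (hK j).isClosed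
      filter_upwards [Ioo_mem_nhdsGT hε] with δ hδ _
      exact (h.mono (thickening_mono hδ.2.le _) (thickening_mono hδ.2.le _)).preimage _
    · exact .of_forall fun _ h ↦ absurd h hij
  obtain ⟨δ, hδ, h⟩ := ((eventually_mem_nhdsWithin (a := (0 : ℝ)) (s := Set.Ioi 0)).and <|
    eventually_all.2 fun i ↦ eventually_all.2 <| eventually_disjoint i).exists
  exact ⟨δ, hδ, h⟩

end GridNhd

section Drawing

open unitInterval

/-- A drawing of `G` in the plane as in `IsPlanar`, together with an orientation of the edges:
`arc e` runs from the point of `tail e` to that of `head e`. -/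
structure Drawing {V : Type*} (G : SimpleGraph V) where
  point : V → ℝ × ℝ
  point_injective : Function.Injective point
  tail : G.edgeSet → V
  head : G.edgeSet → V
  ends : ∀ e, e.1 = s(tail e, head e)
  arc : G.edgeSet → I → ℝ × ℝ
  arc_continuous : ∀ e, Continuous (arc e)
  arc_injective : ∀ e, Function.Injective (arc e)
  arc_zero : ∀ e, arc e 0 = point (tail e)
  arc_one : ∀ e, arc e 1 = point (head e)
  arc_ne_point : ∀ e t, t ≠ 0 → t ≠ 1 → ∀ v, arc e t ≠ point v
  arc_mem_range : ∀ e e', e ≠ e' → ∀ s t, arc e s = arc e' t → arc e s ∈ Set.range point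

variable {V : Type*} {G : SimpleGraph V}

lemma IsPlanar.nonempty_drawing (hG : IsPlanar G) : Nonempty (Drawing G) := by
  obtain ⟨point, arc, point_injective, arc_continuous, ends, arc_injective, avoid, cross⟩ := hG
  choose tail head ends arc_zero arc_one using ends
  exact ⟨{
    point, point_injective, tail, head, ends, arc, arc_continuous, arc_injective, arc_zero, arc_one
    arc_ne_point e t h0 h1 := avoid e t (Subtype.coe_ne_coe.2 h0) (Subtype.coe_ne_coe.2 h1)
    arc_mem_range := cross }⟩

namespace Drawing

variable (D : Drawing G)

lemma arc_eq_point_iff {e : G.edgeSet} {t : I} {v : V} :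
    D.arc e t = D.point v ↔ t = 0 ∧ D.tail e = v ∨ t = 1 ∧ D.head e = v := by
  refine ⟨fun h ↦ ?_, ?_⟩
  · by_cases h0 : t = 0
    · exact Or.inl ⟨h0, D.point_injective (by rw [← h, h0, arc_zero])⟩
    · by_cases h1 : t = 1
      · exact Or.inr ⟨h1, D.point_injective (by rw [← h, h1, arc_one])⟩
      · exact absurd h (D.arc_ne_point e t h0 h1 v)
  · rintro (⟨rfl, rfl⟩ | ⟨rfl, rfl⟩)
    exacts [D.arc_zero e, D.arc_one e]

/-- The parameter at which arcs are cut into halves. -/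
noncomputable def midParam : I := ⟨1 / 2, by norm_num, by norm_num⟩

/-- The half of the arc of `e` next to the tail of `e`, midpoint included. -/
def tailHalf (e : G.edgeSet) : Set (ℝ × ℝ) := D.arc e '' Set.Iic midParam

/-- The half of the arc of `e` next to the head of `e`, midpoint included. -/
def headHalf (e : G.edgeSet) : Set (ℝ × ℝ) := D.arc e '' Set.Ici midParam

/-- The point of `v` together with the halves of arcs which leave `v`. -/
def star (v : V) : Set (ℝ × ℝ) := {D.point v} ∪ ⋃ e : {e // D.tail e = v}, D.tailHalf e

lemma zero_lt_midParam : 0 < midParam := by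
  rw [midParam, ← Subtype.coe_lt_coe]
  norm_num

lemma midParam_lt_one : midParam < 1 := by
  rw [midParam, ← Subtype.coe_lt_coe]
  norm_num

lemma point_tail_mem_tailHalf (e : G.edgeSet) : D.point (D.tail e) ∈ D.tailHalf e :=
  ⟨0, zero_lt_midParam.le, D.arc_zero e⟩

lemma isConnected_tailHalf (e : G.edgeSet) : IsConnected (D.tailHalf e) :=
  isConnected_Iic.image _ (D.arc_continuous e).continuousOn

lemma isConnected_headHalf (e : G.edgeSet) : IsConnected (D.headHalf e) :=
  isConnected_Ici.image _ (D.arc_continuous e).continuousOn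

lemma isCompact_tailHalf (e : G.edgeSet) : IsCompact (D.tailHalf e) :=
  isClosed_Iic.isCompact.image (D.arc_continuous e)

lemma isCompact_headHalf (e : G.edgeSet) : IsCompact (D.headHalf e) :=
  isClosed_Ici.isCompact.image (D.arc_continuous e)

lemma point_mem_star (v : V) : D.point v ∈ D.star v := Or.inl rfl

lemma tailHalf_subset_star (e : G.edgeSet) : D.tailHalf e ⊆ D.star (D.tail e) := fun _ hx ↦
  Or.inr (Set.mem_iUnion.2 ⟨⟨e, rfl⟩, hx⟩)

lemma headHalf_inter_star_tail_nonempty (e : G.edgeSet) :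
    (D.headHalf e ∩ D.star (D.tail e)).Nonempty :=
  ⟨D.arc e midParam, ⟨_, Set.self_mem_Ici, rfl⟩,
    D.tailHalf_subset_star e ⟨_, Set.self_mem_Iic, rfl⟩⟩

lemma headHalf_inter_star_head_nonempty (e : G.edgeSet) :
    (D.headHalf e ∩ D.star (D.head e)).Nonempty :=
  ⟨_, ⟨1, midParam_lt_one.le, D.arc_one e⟩, D.point_mem_star _⟩

lemma mem_star {x : ℝ × ℝ} {v : V} :
    x ∈ D.star v ↔ x = D.point v ∨ ∃ e, D.tail e = v ∧ x ∈ D.tailHalf e := by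
  simp [star]

lemma isConnected_star (v : V) : IsConnected (D.star v) := by
  refine ⟨⟨_, D.point_mem_star v⟩, isPreconnected_of_forall (D.point v) fun x hx ↦ ?_⟩
  rcases D.mem_star.1 hx with rfl | ⟨e, rfl, he⟩
  · exact ⟨{D.point v}, Set.subset_union_left, rfl, rfl, isPreconnected_singleton⟩
  · exact ⟨D.tailHalf e, D.tailHalf_subset_star e, D.point_tail_mem_tailHalf e, he,
      (D.isConnected_tailHalf e).isPreconnected⟩

lemma isCompact_star [Finite V] (v : V) : IsCompact (D.star v) :=
  isCompact_singleton.union (isCompact_iUnion fun e ↦ D.isCompact_tailHalf e)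

lemma tail_eq_of_point_mem_tailHalf {e : G.edgeSet} {v : V} (h : D.point v ∈ D.tailHalf e) :
    D.tail e = v := by
  obtain ⟨t, ht, htv⟩ := h
  rcases D.arc_eq_point_iff.1 htv with ⟨-, h⟩ | ⟨rfl, -⟩
  exacts [h, absurd ht midParam_lt_one.not_ge]

lemma head_eq_of_point_mem_headHalf {e : G.edgeSet} {v : V} (h : D.point v ∈ D.headHalf e) :
    D.head e = v := by
  obtain ⟨t, ht, htv⟩ := h
  rcases D.arc_eq_point_iff.1 htv with ⟨rfl, -⟩ | ⟨-, h⟩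
  exacts [absurd ht zero_lt_midParam.not_ge, h]

lemma eq_or_mem_range_of_mem_arcs {e e' : G.edgeSet} {x : ℝ × ℝ} (h : x ∈ Set.range (D.arc e))
    (h' : x ∈ Set.range (D.arc e')) : e = e' ∨ x ∈ Set.range D.point := by
  obtain ⟨s, rfl⟩ := h
  obtain ⟨t, ht⟩ := h'
  exact or_iff_not_imp_left.2 fun hee' ↦ D.arc_mem_range e e' hee' s t ht.symm

lemma tailHalf_subset_range (e : G.edgeSet) : D.tailHalf e ⊆ Set.range (D.arc e) :=
  Set.image_subset_range _ _

lemma headHalf_subset_range (e : G.edgeSet) : D.headHalf e ⊆ Set.range (D.arc e) :=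
  Set.image_subset_range _ _

lemma eq_of_point_mem_star {u v : V} (h : D.point u ∈ D.star v) : u = v := by
  rcases D.mem_star.1 h with huv | ⟨e, rfl, he⟩
  · exact D.point_injective huv
  · exact (D.tail_eq_of_point_mem_tailHalf he).symm

lemma star_disjoint : Pairwise (Function.onFun Disjoint D.star) := by
  refine fun u v huv ↦ Set.disjoint_left.2 fun x hu hv ↦ huv ?_
  have hpoint (h : x ∈ Set.range D.point) : u = v := by
    obtain ⟨w, rfl⟩ := h
    exact (D.eq_of_point_mem_star hu).symm.trans (D.eq_of_point_mem_star hv)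
  rcases D.mem_star.1 hu with rfl | ⟨e, rfl, he⟩
  · exact hpoint ⟨u, rfl⟩
  rcases D.mem_star.1 hv with rfl | ⟨e', rfl, he'⟩
  · exact hpoint ⟨v, rfl⟩
  rcases D.eq_or_mem_range_of_mem_arcs (D.tailHalf_subset_range e he)
    (D.tailHalf_subset_range e' he') with rfl | h
  exacts [rfl, hpoint h]

lemma headHalf_disjoint {e e' : G.edgeSet} (h : D.head e ≠ D.head e') :
    Disjoint (D.headHalf e) (D.headHalf e') := by
  refine Set.disjoint_left.2 fun x he he' ↦ h ?_
  rcases D.eq_or_mem_range_of_mem_arcs (D.headHalf_subset_range e he)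
    (D.headHalf_subset_range e' he') with rfl | ⟨v, rfl⟩
  · rfl
  · rw [D.head_eq_of_point_mem_headHalf he, D.head_eq_of_point_mem_headHalf he']

lemma headHalf_disjoint_star {e : G.edgeSet} {v : V} (htail : v ≠ D.tail e)
    (hhead : v ≠ D.head e) : Disjoint (D.headHalf e) (D.star v) := by
  refine Set.disjoint_left.2 fun x he hv ↦ ?_
  have hpoint (h : x ∈ Set.range D.point) : False := by
    obtain ⟨w, rfl⟩ := h
    rw [← D.eq_of_point_mem_star hv] at hhead
    exact hhead (D.head_eq_of_point_mem_headHalf he).symm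
  rcases D.mem_star.1 hv with rfl | ⟨e', rfl, he'⟩
  · exact hpoint ⟨v, rfl⟩
  rcases D.eq_or_mem_range_of_mem_arcs (D.headHalf_subset_range e he)
    (D.tailHalf_subset_range e' he') with rfl | h
  exacts [htail rfl, hpoint h]

lemma nonempty_minorModel [Finite V] (D : Drawing G) : Nonempty (MinorModel G gridGraph) := by
  obtain ⟨δ, hδ, disjoint⟩ := exists_forall_disjoint_gridNhd (K := Sum.elim D.star D.headHalf)
    (Sum.forall.2 ⟨D.isCompact_star, D.isCompact_headHalf⟩)
  exact nonempty_minorModel_of_channels D.ends (P := fun v ↦ gridNhd δ (D.star v))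
    (Q := fun e ↦ gridNhd δ (D.headHalf e))
    (fun v ↦ gridNhd_finite hδ.ne' (D.isCompact_star v).isBounded)
    (fun v ↦ gridNhd_connected hδ (D.isConnected_star v))
    (fun u v huv ↦ disjoint (.inl u) (.inl v) (D.star_disjoint huv))
    (fun e ↦ gridNhd_connected hδ (D.isConnected_headHalf e))
    (fun e ↦ gridNhd_inter_nonempty hδ (D.headHalf_inter_star_tail_nonempty e))
    (fun e ↦ gridNhd_inter_nonempty hδ (D.headHalf_inter_star_head_nonempty e))
    (fun e v ht hh ↦ disjoint (.inr e) (.inl v) (D.headHalf_disjoint_star ht hh))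
    (fun e e' h ↦ disjoint (.inr e) (.inr e') (D.headHalf_disjoint h))

end Drawing

lemma IsPlanar.nonempty_minorModel [Finite V] (hG : IsPlanar G) :
    Nonempty (MinorModel G gridGraph) :=
  hG.nonempty_drawing.elim Drawing.nonempty_minorModel

end Drawing

section BookEmbedding

open unitInterval AffineMap

/-- The point above or below `x`, as `up` says, of the parabolic arch over the interval `[a, b]`
of the horizontal axis. -/
def archPoint (up : Bool) (a b x : ℝ) : ℝ × ℝ := (x, (bif up then 1 else -1) * ((x - a) * (b - x)))

lemma continuous_archPoint (up : Bool) (a b : ℝ) : Continuous (archPoint up a b) := by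
  unfold archPoint
  fun_prop

lemma archPoint_left (up : Bool) (a b : ℝ) : archPoint up a b a = (a, 0) := by simp [archPoint]

lemma archPoint_right (up : Bool) (a b : ℝ) : archPoint up a b b = (b, 0) := by simp [archPoint]

lemma archPoint_injective (up : Bool) (a b : ℝ) : Function.Injective (archPoint up a b) :=
  fun _ _ h ↦ congrArg Prod.fst h

lemma archPoint_snd_ne_zero {a b x : ℝ} (up : Bool) (hx : x ∈ Set.Ioo a b) :
    (archPoint up a b x).2 ≠ 0 :=
  mul_ne_zero (by cases up <;> simp) (mul_pos (sub_pos.2 hx.1) (sub_pos.2 hx.2)).ne'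

lemma eq_of_archPoint_eq {up up' : Bool} {a b c d x y : ℝ} (hx : x ∈ Set.Ioo a b)
    (hy : y ∈ Set.Ioo c d) (h : archPoint up a b x = archPoint up' c d y)
    (hac : up = up' → ¬(a < c ∧ c < b ∧ b < d)) (hca : up = up' → ¬(c < a ∧ a < d ∧ d < b)) :
    a = c ∧ b = d := by
  obtain ⟨rfl, height⟩ := Prod.mk.inj h
  have pos_left := mul_pos (sub_pos.2 hx.1) (sub_pos.2 hx.2)
  have pos_right := mul_pos (sub_pos.2 hy.1) (sub_pos.2 hy.2)
  obtain ⟨hax, hxb⟩ := hx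
  obtain ⟨hcx, hxd⟩ := hy
  have same_side : up = up' := by
    cases up <;> cases up' <;> simp only [cond_true, cond_false] at height <;>
      first | rfl | linarith
  have same_height : (x - a) * (b - x) = (x - c) * (d - x) := by
    subst same_side
    exact mul_left_cancel₀ (by cases up <;> simp) height
  have nested : a ≤ c ∧ d ≤ b ∨ c ≤ a ∧ b ≤ d := by grind [hac same_side, hca same_side]
  rcases nested with ⟨hac, hdb⟩ | ⟨hca, hbd⟩ <;> constructor <;> nlinarith

variable {V : Type*} {G : SimpleGraph V}

lemma exists_lt_page_of_mem_edgeSet {pos : V → ℝ} (pos_injective : Function.Injective pos)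
    {page : Bool → V → V → Prop}
    (covered : ∀ x y, G.Adj x y → pos x < pos y → ∃ up, page up x y) {e : Sym2 V}
    (he : e ∈ G.edgeSet) : ∃ x y up, e = s(x, y) ∧ pos x < pos y ∧ page up x y := by
  induction e with | _ x y
  rcases (pos_injective.ne (G.ne_of_adj he)).lt_or_gt with h | h
  · obtain ⟨up, hup⟩ := covered x y he h
    exact ⟨x, y, up, rfl, h, hup⟩
  · obtain ⟨up, hup⟩ := covered y x (G.adj_symm he) h
    exact ⟨y, x, up, Sym2.eq_swap, h, hup⟩

/-- The spine of the book is the horizontal axis; its two pages are the half planes above and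
below. -/
lemma isPlanar_of_noncrossing {pos : V → ℝ} (pos_injective : Function.Injective pos)
    {page : Bool → V → V → Prop}
    (covered : ∀ x y, G.Adj x y → pos x < pos y → ∃ up, page up x y)
    (noncrossing : ∀ up x y z w, page up x y → page up z w →
      ¬(pos x < pos z ∧ pos z < pos y ∧ pos y < pos w)) : IsPlanar G := by
  choose tail head up ends lt hpage using fun e : G.edgeSet ↦
    exists_lt_page_of_mem_edgeSet pos_injective covered e.2
  let coord e (t : I) : ℝ := lineMap (pos (tail e)) (pos (head e)) (t : ℝ)
  let arc e (t : I) := archPoint (up e) (pos (tail e)) (pos (head e)) (coord e t)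
  have arc_zero (e) : arc e 0 = (pos (tail e), 0) := by simp [arc, coord, archPoint_left]
  have arc_one (e) : arc e 1 = (pos (head e), 0) := by simp [arc, coord, archPoint_right]
  have coord_mem (e) {t : I} (h0 : t ≠ 0) (h1 : t ≠ 1) :
      coord e t ∈ Set.Ioo (pos (tail e)) (pos (head e)) :=
    ⟨(left_lt_lineMap_iff_lt (unitInterval.pos_iff_ne_zero.2 h0)).2 (lt e),
      (lineMap_lt_right_iff_lt (unitInterval.lt_one_iff_ne_one.2 h1)).2 (lt e)⟩
  refine ⟨fun x ↦ (pos x, 0), arc, fun x y h ↦ pos_injective (congrArg Prod.fst h), fun e ↦ ?_,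
    fun e ↦ ⟨tail e, head e, ends e, arc_zero e, arc_one e⟩, fun e ↦ ?_, fun e t h0 h1 v h ↦ ?_,
    fun e e' hee' s t h ↦ ?_⟩
  · exact (continuous_archPoint _ _ _).comp (lineMap_continuous.comp continuous_subtype_val)
  · exact (archPoint_injective _ _ _).comp
      ((lineMap_injective ℝ (lt e).ne).comp Subtype.val_injective)
  · exact archPoint_snd_ne_zero _ (coord_mem e (Subtype.coe_ne_coe.1 h0) (Subtype.coe_ne_coe.1 h1))
      (congrArg Prod.snd h)
  · by_contra hrange
    have interior {e} {t : I} (ht : arc e t ∉ Set.range fun x ↦ (pos x, (0 : ℝ))) :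
        coord e t ∈ Set.Ioo (pos (tail e)) (pos (head e)) := by
      refine coord_mem e ?_ ?_ <;> rintro rfl
      exacts [ht ⟨_, (arc_zero e).symm⟩, ht ⟨_, (arc_one e).symm⟩]
    obtain ⟨htail, hhead⟩ := eq_of_archPoint_eq (interior hrange) (interior (h ▸ hrange)) h
      (fun hup ↦ noncrossing _ _ _ _ _ (hpage e) (hup ▸ hpage e'))
      (fun hup ↦ noncrossing _ _ _ _ _ (hpage e') (hup ▸ hpage e))
    refine hee' (Subtype.ext ?_)
    rw [ends, ends, pos_injective htail, pos_injective hhead]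

end BookEmbedding

section PlanarCover

variable {U V : Type*} {T : SimpleGraph U} {G : SimpleGraph V} {k : ℕ}

/-- `G` is a union of `k` planar graphs; `thickness G` is the least such `k`. -/
def HasPlanarCover (G : SimpleGraph V) (k : ℕ) : Prop :=
  ∃ H : Fin k → SimpleGraph V, (∀ i, H i ≤ G) ∧ (∀ i, IsPlanar (H i)) ∧ ⨆ i, H i = G

lemma HasPlanarCover.thickness_le (h : HasPlanarCover G k) : thickness G ≤ k := Nat.sInf_le h

lemma HasPlanarCover.le_thickness {l : ℕ} (h : HasPlanarCover G k)
    (hl : ∀ k, HasPlanarCover G k → l ≤ k) : l ≤ thickness G := le_csInf ⟨k, h⟩ hl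

lemma IsPlanar.card_edgeSet_add_four_le [Finite V] [Fintype U] [Fintype T.edgeSet]
    (hG : IsPlanar G) (hT : T.CliqueFree 3) (hU : 3 ≤ Fintype.card U) (φ : T →g G)
    (hφ : Function.Injective φ) : Fintype.card T.edgeSet + 4 ≤ 2 * Fintype.card U := by
  obtain ⟨M⟩ := hG.nonempty_minorModel
  exact (M.comap φ hφ).card_edgeSet_add_four_le hT hU

lemma HasPlanarCover.card_edgeSet_le [Finite V] [Fintype U] [Fintype T.edgeSet]
    (h : HasPlanarCover G k) (hT : T.CliqueFree 3) (hU : 3 ≤ Fintype.card U) (φ : T →g G)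
    (hφ : Function.Injective φ) : Fintype.card T.edgeSet ≤ k * (2 * Fintype.card U - 4) := by
  classical
  obtain ⟨H, -, H_planar, H_iSup⟩ := h
  let layer i : SimpleGraph U := T ⊓ (H i).comap φ
  have card_layer_le (i : Fin k) : (layer i).edgeFinset.card ≤ 2 * Fintype.card U - 4 := by
    have := (H_planar i).card_edgeSet_add_four_le (T := layer i) (hT.anti inf_le_left) hU
      ⟨φ, And.right⟩ hφ
    rw [edgeFinset_card]
    omega
  have edgeFinset_subset : T.edgeFinset ⊆ Finset.univ.biUnion fun i ↦ (layer i).edgeFinset := by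
    intro e he
    induction e with | _ x y
    rw [mem_edgeFinset, mem_edgeSet] at he
    obtain ⟨i, hi⟩ := iSup_adj.1 (H_iSup.ge (φ.map_adj he))
    exact Finset.mem_biUnion.2 ⟨i, Finset.mem_univ i, mem_edgeFinset.2 ⟨he, hi⟩⟩
  calc Fintype.card T.edgeSet = T.edgeFinset.card := T.edgeFinset_card.symm
    _ ≤ _ := Finset.card_le_card edgeFinset_subset
    _ ≤ Fintype.card (Fin k) * (2 * Fintype.card U - 4) :=
      Finset.card_biUnion_le_card_mul _ _ _ fun i _ ↦ card_layer_le i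
    _ = k * (2 * Fintype.card U - 4) := by rw [Fintype.card_fin]

lemma card_mul_card_le_card_edgeSet_completeBipartiteGraph (α β : Type*) [Fintype α] [Fintype β]
    [Fintype (completeBipartiteGraph α β).edgeSet] :
    Fintype.card α * Fintype.card β ≤ Fintype.card (completeBipartiteGraph α β).edgeSet := by
  rw [← Fintype.card_prod]
  refine Fintype.card_le_of_injective
    (fun ab ↦ ⟨s(Sum.inl ab.1, Sum.inr ab.2), by simp [completeBipartiteGraph]⟩) fun ab ab' h ↦ ?_
  simpa [Prod.ext_iff] using congrArg Subtype.val h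

lemma HasPlanarCover.sq_le [Finite V] (h : HasPlanarCover G k) {n : ℕ} (hn : 2 ≤ n)
    (φ : completeBipartiteGraph (Fin n) (Fin n) →g G) (hφ : Function.Injective φ) :
    n ^ 2 ≤ k * (4 * n - 4) := by
  classical
  have triangle_free : (completeBipartiteGraph (Fin n) (Fin n)).CliqueFree 3 :=
    (CompleteBipartiteGraph.bicoloring _ _).colorable.cliqueFree (by simp)
  have card_edges := card_mul_card_le_card_edgeSet_completeBipartiteGraph (Fin n) (Fin n)
  have upper := h.card_edgeSet_le triangle_free (by simp; omega) φ hφ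
  simp only [Fintype.card_sum, Fintype.card_fin] at card_edges upper
  calc n ^ 2 = n * n := sq n
    _ ≤ k * (2 * (n + n) - 4) := card_edges.trans upper
    _ = k * (4 * n - 4) := by congr 1; omega

end PlanarCover

section TwoPageGraph

variable {V ι : Type*} {G H : SimpleGraph V}

lemma IsPlanar.mono (hH : IsPlanar H) (hGH : G ≤ H) : IsPlanar G := by
  obtain ⟨f, γ, f_injective, γ_continuous, ends, γ_injective, avoid, cross⟩ := hH
  let ψ := Set.inclusion (edgeSet_mono hGH)
  exact ⟨f, γ ∘ ψ, f_injective, fun e ↦ γ_continuous (ψ e), fun e ↦ ends (ψ e),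
    fun e ↦ γ_injective (ψ e), fun e ↦ avoid (ψ e),
    fun e e' hee' ↦ cross (ψ e) (ψ e') ((Set.inclusion_injective _).ne hee')⟩

lemma HasPlanarCover.of_le_iSup [Fintype ι] {H : ι → SimpleGraph V} (hH : ∀ i, IsPlanar (H i))
    (hG : G ≤ ⨆ i, H i) : HasPlanarCover G (Fintype.card ι) := by
  refine ⟨fun j ↦ G ⊓ H ((Fintype.equivFin ι).symm j), fun _ ↦ inf_le_left,
    fun j ↦ (hH _).mono inf_le_right, ?_⟩
  rw [← inf_iSup_eq, (Fintype.equivFin ι).symm.iSup_comp (g := H), inf_eq_left.2 hG]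

/-- The graph on `ℕ` whose edges `p < q` are those listed on one of two pages. It stands for a book
with spine `ℕ`; only the part `p < q` of a page matters. -/
def twoPageGraph (page : Bool → ℕ → ℕ → Prop) : SimpleGraph ℕ :=
  fromRel fun p q ↦ p < q ∧ (page false p q ∨ page true p q)

lemma twoPageGraph_adj {page : Bool → ℕ → ℕ → Prop} {p q : ℕ} :
    (twoPageGraph page).Adj p q ↔
      p < q ∧ (page false p q ∨ page true p q) ∨ q < p ∧ (page false q p ∨ page true q p) := by
  rw [twoPageGraph, fromRel_adj, and_iff_right_of_imp]
  rintro (⟨h, -⟩ | ⟨h, -⟩)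
  exacts [h.ne, h.ne']

lemma isPlanar_comap_twoPageGraph {page : Bool → ℕ → ℕ → Prop}
    (noncrossing : ∀ up a b c d, page up a b → page up c d → ¬(a < c ∧ c < b ∧ b < d))
    {pos : V → ℕ} (pos_injective : Function.Injective pos) :
    IsPlanar ((twoPageGraph page).comap pos) := by
  refine isPlanar_of_noncrossing (pos := fun x ↦ (pos x : ℝ))
    (page := fun up x y ↦ page up (pos x) (pos y)) (Nat.cast_injective.comp pos_injective)
    (fun x y hxy hlt ↦ ?_) fun up x y z w hxy hzw ↦ ?_
  · rw [Nat.cast_lt] at hlt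
    rcases twoPageGraph_adj.1 hxy with ⟨-, h | h⟩ | ⟨hgt, -⟩
    exacts [⟨false, h⟩, ⟨true, h⟩, absurd hgt hlt.not_gt]
  · simpa only [Nat.cast_lt] using noncrossing up _ _ _ _ hxy hzw

end TwoPageGraph

section TripartiteCover

/-- The vertices of `K_{1,n,n}`: the apex `⟨0, 0⟩`, the left vertices `⟨1, a⟩` and the right
vertices `⟨2, b⟩`. -/
abbrev TripartiteVertex (n : ℕ) : Type := Σ i, (![Fin 1, Fin n, Fin n] : Fin 3 → Type) i

/-- The placement on the spine given by the position of the apex and those of the left and of the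
right vertices. -/
def vertexPos {n : ℕ} (apexPos : ℕ) (leftPos rightPos : ℕ → ℕ) : TripartiteVertex n → ℕ
  | ⟨0, _⟩ => apexPos
  | ⟨1, a⟩ => leftPos (show Fin n from a)
  | ⟨2, b⟩ => rightPos (show Fin n from b)

variable {n : ℕ}

lemma vertexPos_injective {apexPos : ℕ} {leftPos rightPos : ℕ → ℕ}
    (left_injOn : Set.InjOn leftPos (Set.Iio n)) (right_injOn : Set.InjOn rightPos (Set.Iio n))
    (left_ne_apex : ∀ a < n, leftPos a ≠ apexPos) (right_ne_apex : ∀ b < n, rightPos b ≠ apexPos)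
    (left_ne_right : ∀ a < n, ∀ b < n, leftPos a ≠ rightPos b) :
    Function.Injective (vertexPos apexPos leftPos rightPos : TripartiteVertex n → ℕ) := by
  rintro ⟨i, a⟩ ⟨j, b⟩ h
  fin_cases i <;> fin_cases j
  · exact congrArg _ (Subsingleton.elim (α := Fin 1) a b)
  · exact absurd h.symm (left_ne_apex _ (Fin.is_lt (n := n) b))
  · exact absurd h.symm (right_ne_apex _ (Fin.is_lt (n := n) b))
  · exact absurd h (left_ne_apex _ (Fin.is_lt (n := n) a))
  · exact congrArg _ (Fin.ext (left_injOn (Fin.is_lt (n := n) a) (Fin.is_lt (n := n) b) h))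
  · exact absurd h (left_ne_right _ (Fin.is_lt (n := n) a) _ (Fin.is_lt (n := n) b))
  · exact absurd h (right_ne_apex _ (Fin.is_lt (n := n) a))
  · exact absurd h.symm (left_ne_right _ (Fin.is_lt (n := n) b) _ (Fin.is_lt (n := n) a))
  · exact congrArg _ (Fin.ext (right_injOn (Fin.is_lt (n := n) a) (Fin.is_lt (n := n) b) h))

lemma completeMultipartiteGraph_le_of_adj {H : SimpleGraph (TripartiteVertex n)}
    (apex_left : ∀ a : Fin n, H.Adj ⟨0, (0 : Fin 1)⟩ ⟨1, a⟩)
    (apex_right : ∀ b : Fin n, H.Adj ⟨0, (0 : Fin 1)⟩ ⟨2, b⟩)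
    (left_right : ∀ a b : Fin n, H.Adj ⟨1, a⟩ ⟨2, b⟩) :
    completeMultipartiteGraph ![Fin 1, Fin n, Fin n] ≤ H := by
  have apex_eq (z : Fin 1) : z = 0 := Subsingleton.elim z 0
  rintro ⟨i, a⟩ ⟨j, b⟩ hij
  fin_cases i <;> fin_cases j
  · exact absurd rfl hij
  · exact apex_eq a ▸ apex_left b
  · exact apex_eq a ▸ apex_right b
  · exact apex_eq b ▸ (apex_left a).symm
  · exact absurd rfl hij
  · exact left_right a b
  · exact apex_eq b ▸ (apex_right a).symm
  · exact (left_right b a).symm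
  · exact absurd rfl hij

/-- The pages of the layer which carries the star of the apex and the matching of the left with
the right vertices: the star at `0`, and the path `0, 1, 2, …`. -/
def starPage : Bool → ℕ → ℕ → Prop
  | false, p, _ => p = 0
  | true, p, q => q = p + 1

lemma starPage_noncrossing (up : Bool) (a b c d : ℕ) (hab : starPage up a b)
    (hcd : starPage up c d) : ¬(a < c ∧ c < b ∧ b < d) := by
  cases up <;> simp only [starPage] at hab hcd <;> omega

/-- The layer carrying the star of the apex and the edges joining `⟨1, a⟩` to `⟨2, a⟩`. -/
def starLayer (n : ℕ) : SimpleGraph (TripartiteVertex n) :=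
  (twoPageGraph starPage).comap (vertexPos 0 (2 * · + 1) (2 * · + 2))

lemma isPlanar_starLayer : IsPlanar (starLayer n) :=
  isPlanar_comap_twoPageGraph starPage_noncrossing <| vertexPos_injective
    (fun _ _ _ _ _ ↦ by grind) (fun _ _ _ _ _ ↦ by grind) (by grind) (by grind) (by grind)

/-- The pages of the layer of a block. With `N` the length of an interval, the spine carries the
four intervals `[0, N]`, `[2N, 3N]`, `[4N, 5N]` and `[6N, 7N]`, whose eight ends are the vertices of
the block; each page joins four of the ends to intervals, in a noncrossing way. -/
def blockPage (N : ℕ) : Bool → ℕ → ℕ → Prop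
  | false, p, q => p ≤ N ∧ q = 3 * N ∨ p = N ∧ 2 * N ≤ q ∧ q ≤ 3 * N ∨
      4 * N ≤ p ∧ p ≤ 5 * N ∧ q = 7 * N ∨ p = 5 * N ∧ 6 * N ≤ q ∧ q ≤ 7 * N
  | true, p, q => p ≤ N ∧ q = 6 * N ∨ 2 * N ≤ p ∧ p ≤ 3 * N ∧ q = 4 * N ∨
      p = 2 * N ∧ 4 * N ≤ q ∧ q ≤ 5 * N ∨ p = 0 ∧ 6 * N ≤ q ∧ q ≤ 7 * N

lemma blockPage_noncrossing (N : ℕ) (up : Bool) (a b c d : ℕ) (hab : blockPage N up a b)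
    (hcd : blockPage N up c d) : ¬(a < c ∧ c < b ∧ b < d) := by
  cases up <;> simp only [blockPage] at hab hcd <;> omega

/-- The position of the left vertex `a` in the layer of the block `r`, which consists of the indices
`4r, …, 4r + 3`. The vertices outside of the block go to the interior of `[2N, 3N]` or of
`[6N, 7N]`. -/
def blockLeftPos (N r a : ℕ) : ℕ :=
  if a / 4 = r then
    if a % 4 = 0 then 3 * N else if a % 4 = 1 then 6 * N else if a % 4 = 2 then 2 * N else 7 * N
  else if a % 4 < 2 then 2 * N + (a + 1) else 6 * N + (a + 1)

/-- The position of the right vertex `b` in the layer of the block `r`. The vertices outside of the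
block go to the interior of `[0, N]` or of `[4N, 5N]`. -/
def blockRightPos (N r b : ℕ) : ℕ :=
  if b / 4 = r then
    if b % 4 = 0 then 5 * N else if b % 4 = 1 then 4 * N else if b % 4 = 2 then 0 else N
  else if b % 2 = 0 then b + 1 else 4 * N + (b + 1)

lemma blockLeftPos_injOn (r : ℕ) : Set.InjOn (blockLeftPos (n + 1) r) (Set.Iio n) := by
  intro a ha a' ha' h
  rw [Set.mem_Iio] at ha ha'
  unfold blockLeftPos at h
  split_ifs at h <;> omega

lemma blockRightPos_injOn (r : ℕ) : Set.InjOn (blockRightPos (n + 1) r) (Set.Iio n) := by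
  intro b hb b' hb' h
  rw [Set.mem_Iio] at hb hb'
  unfold blockRightPos at h
  split_ifs at h <;> omega

lemma blockLeftPos_ne_blockRightPos (r : ℕ) {a b : ℕ} (ha : a < n) (hb : b < n) :
    blockLeftPos (n + 1) r a ≠ blockRightPos (n + 1) r b := by
  unfold blockLeftPos blockRightPos
  split_ifs <;> omega

lemma blockLeftPos_lt (r : ℕ) {a : ℕ} (ha : a < n) : blockLeftPos (n + 1) r a < 8 * (n + 1) := by
  unfold blockLeftPos
  split_ifs <;> omega

lemma blockRightPos_lt (r : ℕ) {b : ℕ} (hb : b < n) : blockRightPos (n + 1) r b < 8 * (n + 1) := by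
  unfold blockRightPos
  split_ifs <;> omega

/-- The layer of the block `r`; the apex is isolated. -/
def blockLayer (n r : ℕ) : SimpleGraph (TripartiteVertex n) :=
  (twoPageGraph (blockPage (n + 1))).comap
    (vertexPos (8 * (n + 1)) (blockLeftPos (n + 1) r) (blockRightPos (n + 1) r))

lemma isPlanar_blockLayer (r : ℕ) : IsPlanar (blockLayer n r) :=
  isPlanar_comap_twoPageGraph (blockPage_noncrossing _) <|
    vertexPos_injective (blockLeftPos_injOn r) (blockRightPos_injOn r)
      (fun _ ha ↦ (blockLeftPos_lt r ha).ne) (fun _ hb ↦ (blockRightPos_lt r hb).ne)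
      fun _ ha _ hb ↦ blockLeftPos_ne_blockRightPos r ha hb

lemma blockPage_adj_blockLeftPos {N : ℕ} (hN : 0 < N) {a q : ℕ}
    (hq : a % 4 < 2 ∧ q ≤ N ∨ 2 ≤ a % 4 ∧ 4 * N ≤ q ∧ q ≤ 5 * N) :
    (twoPageGraph (blockPage N)).Adj (blockLeftPos N (a / 4) a) q := by
  rw [blockLeftPos, if_pos rfl, twoPageGraph_adj]
  split_ifs
  · exact .inr ⟨by omega, .inl (.inl ⟨by omega, rfl⟩)⟩
  · exact .inr ⟨by omega, .inr (.inl ⟨by omega, rfl⟩)⟩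
  · exact .inl ⟨by omega, .inr (.inr (.inr (.inl ⟨rfl, by omega⟩)))⟩
  · exact .inr ⟨by omega, .inl (.inr (.inr (.inl ⟨by omega, by omega, rfl⟩)))⟩

lemma blockPage_adj_blockRightPos {N : ℕ} (hN : 0 < N) {b p : ℕ}
    (hp : b % 2 = 1 ∧ 2 * N ≤ p ∧ p ≤ 3 * N ∨ b % 2 = 0 ∧ 6 * N ≤ p ∧ p ≤ 7 * N) :
    (twoPageGraph (blockPage N)).Adj p (blockRightPos N (b / 4) b) := by
  rw [blockRightPos, if_pos rfl, twoPageGraph_adj]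
  split_ifs
  · exact .inr ⟨by omega, .inl (.inr (.inr (.inr ⟨rfl, by omega⟩)))⟩
  · exact .inl ⟨by omega, .inr (.inr (.inl ⟨by omega, by omega, rfl⟩))⟩
  · exact .inr ⟨by omega, .inr (.inr (.inr (.inr ⟨rfl, by omega⟩)))⟩
  · exact .inr ⟨by omega, .inl (.inr (.inl ⟨rfl, by omega⟩))⟩

lemma blockLeftPos_mem_interval {N : ℕ} (r : ℕ) {a : ℕ} (ha : a < N) :
    (a / 4 = r ∧ a % 2 = 0 ∨ a / 4 ≠ r ∧ a % 4 < 2) ∧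
        2 * N ≤ blockLeftPos N r a ∧ blockLeftPos N r a ≤ 3 * N ∨
      (a / 4 = r ∧ a % 2 = 1 ∨ a / 4 ≠ r ∧ 2 ≤ a % 4) ∧
        6 * N ≤ blockLeftPos N r a ∧ blockLeftPos N r a ≤ 7 * N := by
  unfold blockLeftPos
  split_ifs <;> omega

lemma blockRightPos_mem_interval {N : ℕ} (r : ℕ) {b : ℕ} (hb : b < N) :
    (b / 4 = r ∧ 2 ≤ b % 4 ∨ b / 4 ≠ r ∧ b % 2 = 0) ∧ blockRightPos N r b ≤ N ∨
      (b / 4 = r ∧ b % 4 < 2 ∨ b / 4 ≠ r ∧ b % 2 = 1) ∧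
        4 * N ≤ blockRightPos N r b ∧ blockRightPos N r b ≤ 5 * N := by
  unfold blockRightPos
  split_ifs <;> omega

lemma blockPage_adj_or_adj {N a b : ℕ} (ha : a < N) (hb : b < N) (hab : a ≠ b) :
    (twoPageGraph (blockPage N)).Adj (blockLeftPos N (a / 4) a) (blockRightPos N (a / 4) b) ∨
      (twoPageGraph (blockPage N)).Adj (blockLeftPos N (b / 4) a) (blockRightPos N (b / 4) b) := by
  refine Or.imp (blockPage_adj_blockLeftPos (by omega)) (blockPage_adj_blockRightPos (by omega)) ?_
  have left_mem := blockLeftPos_mem_interval (b / 4) ha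
  have right_mem := blockRightPos_mem_interval (a / 4) hb
  omega

lemma exists_blockLayer_adj {a b : Fin n} (hab : a ≠ b) :
    ∃ r : ℕ, (r = a / 4 ∨ r = b / 4) ∧ (blockLayer n r).Adj ⟨1, a⟩ ⟨2, b⟩ := by
  rcases blockPage_adj_or_adj (Nat.lt_succ_of_lt a.isLt) (Nat.lt_succ_of_lt b.isLt)
    (Fin.val_ne_of_ne hab) with h | h
  exacts [⟨_, .inl rfl, h⟩, ⟨_, .inr rfl, h⟩]

lemma starLayer_adj_apex_left (a : Fin n) : (starLayer n).Adj ⟨0, (0 : Fin 1)⟩ ⟨1, a⟩ :=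
  twoPageGraph_adj.2 (.inl ⟨Nat.succ_pos _, .inl rfl⟩)

lemma starLayer_adj_apex_right (b : Fin n) : (starLayer n).Adj ⟨0, (0 : Fin 1)⟩ ⟨2, b⟩ :=
  twoPageGraph_adj.2 (.inl ⟨Nat.succ_pos _, .inl rfl⟩)

lemma starLayer_adj_left_right (a : Fin n) : (starLayer n).Adj ⟨1, a⟩ ⟨2, a⟩ :=
  twoPageGraph_adj.2 (.inl ⟨Nat.lt_succ_self _, .inr rfl⟩)

lemma hasPlanarCover_completeMultipartiteGraph {p : ℕ} (hp : n ≤ 4 * p) :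
    HasPlanarCover (completeMultipartiteGraph ![Fin 1, Fin n, Fin n]) (p + 1) := by
  let layer : Option (Fin p) → SimpleGraph (TripartiteVertex n)
    | none => starLayer n
    | some r => blockLayer n r
  have layer_planar : ∀ i, IsPlanar (layer i)
    | none => isPlanar_starLayer
    | some r => isPlanar_blockLayer r
  have adj_of_layer {x y} (i) (h : (layer i).Adj x y) : (⨆ i, layer i).Adj x y :=
    iSup_adj.2 ⟨i, h⟩
  have covered : completeMultipartiteGraph ![Fin 1, Fin n, Fin n] ≤ ⨆ i, layer i := by
    refine completeMultipartiteGraph_le_of_adj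
      (fun a ↦ adj_of_layer none (starLayer_adj_apex_left a))
      (fun b ↦ adj_of_layer none (starLayer_adj_apex_right b)) fun a b ↦ ?_
    rcases eq_or_ne a b with rfl | hab
    · exact adj_of_layer none (starLayer_adj_left_right a)
    · obtain ⟨r, hr, hadj⟩ := exists_blockLayer_adj hab
      exact adj_of_layer (some ⟨r, by omega⟩) hadj
  simpa using HasPlanarCover.of_le_iSup layer_planar covered

end TripartiteCover

section Thickness

variable {n : ℕ}

/-- The copy of `K_{n,n}` in `K_{1,n,n}`. -/
def bipartiteHom (n : ℕ) : completeBipartiteGraph (Fin n) (Fin n) →g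
    completeMultipartiteGraph ![Fin 1, Fin n, Fin n] where
  toFun := Sum.elim (fun a ↦ ⟨1, a⟩) (fun b ↦ ⟨2, b⟩)
  map_rel' {x y} h := by
    rcases x with a | a <;> rcases y with b | b <;> simp_all [completeBipartiteGraph]

lemma bipartiteHom_injective : Function.Injective (bipartiteHom n) := by
  have fiber_injective (i : Fin 3) (a b : (![Fin 1, Fin n, Fin n] : Fin 3 → Type) i)
      (h : (⟨i, a⟩ : TripartiteVertex n) = ⟨i, b⟩) : a = b := by simpa using h
  have one_ne_two : (1 : Fin 3) ≠ 2 := by decide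
  rintro (a | a) (b | b) h
  · exact congrArg Sum.inl (fiber_injective 1 a b h)
  · exact absurd (congrArg Sigma.fst h) one_ne_two
  · exact absurd (congrArg Sigma.fst h).symm one_ne_two
  · exact congrArg Sum.inr (fiber_injective 2 a b h)

lemma HasPlanarCover.lt_four_mul {k : ℕ}
    (h : HasPlanarCover (completeMultipartiteGraph ![Fin 1, Fin n, Fin n]) k) (hn : 2 ≤ n) :
    n + 1 < 4 * k := by
  have : ∀ i, Finite ((![Fin 1, Fin n, Fin n] : Fin 3 → Type) i) := by
    intro i
    fin_cases i
    exacts [Finite.of_fintype (Fin 1), Finite.of_fintype (Fin n), Finite.of_fintype (Fin n)]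
  have sq_le := h.sq_le hn (bipartiteHom n) bipartiteHom_injective
  by_contra! hk
  zify [show 4 ≤ 4 * n by omega] at sq_le hk hn
  nlinarith

lemma thickness_completeMultipartiteGraph {p : ℕ} (hp : 1 ≤ p) (hn : n ≤ 4 * p)
    (hn' : 4 * p ≤ n + 1) :
    thickness (completeMultipartiteGraph ![Fin 1, Fin n, Fin n]) = p + 1 := by
  have cover := hasPlanarCover_completeMultipartiteGraph hn
  refine le_antisymm cover.thickness_le (cover.le_thickness fun k hk ↦ ?_)
  have := hk.lt_four_mul (by omega)
  omega

end Thickness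

theorem thickness_K1nn_of_mod (n : ℕ) (hn : 1 ≤ n) (h : n % 4 = 0 ∨ n % 4 = 3) :
    (thickness (completeMultipartiteGraph ![Fin 1, Fin n, Fin n]) : ℤ) = ⌈((n : ℚ) + 2) / 4⌉ := by
  obtain ⟨p, hp, hnp⟩ : ∃ p, 1 ≤ p ∧ (n = 4 * p ∨ n + 1 = 4 * p) :=
    ⟨(n + 1) / 4, by omega, by omega⟩
  rw [thickness_completeMultipartiteGraph hp (by omega) (by omega), eq_comm, Int.ceil_eq_iff]
  have le : (n : ℚ) ≤ 4 * p := by exact_mod_cast (show n ≤ 4 * p by omega)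
  have ge : (4 : ℚ) * p ≤ n + 1 := by exact_mod_cast (show 4 * p ≤ n + 1 by omega)
  push_cast
  constructor <;> linarith
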